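/- arXiv:1908.05456 — 2 statements merged into one kernel-verified Lean document; each statement's English description precedes it below -/
import Mathlib

section
/- Let q be a prime power with q ≥ 4 and q ≠ 9. Set G = C_2 ∗ C_3 and H = PSL(2,q). Then H is a homomorphic image of G (there is a surjective group homomorphism G → H), and there exists a generating pair (h1,h2) of H such that for every group homomorphism θ : G → H and every generating pair (g1,g2) of G one has (θ(g1), θ(g2)) ≠ (h1,h2). -/
/-- `SL(2,F)` -/
abbrev SL2 (F : Type) [Field F] : Type := Matrix.SpecialLinearGroup (Fin 2) F

/-- `PSL(2,F)`, the quotient of `SL(2,F)` by its centre `{±I}`. -/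
abbrev PSL2 (F : Type) [Field F] : Type := SL2 F ⧸ Subgroup.center (SL2 F)

/-- The cyclic group of order `m`. -/
abbrev Cyc (m : ℕ) : Type := Multiplicative (ZMod m)


set_option linter.unusedSimpArgs false

/-- evaluation of a word -/
noncomputable def evw {H : Type} [Group H] (U V : H) : FreeGroup Bool →* H :=
  FreeGroup.lift (fun b => cond b U V)

/-- trace -/
def trc {R : Type} [CommRing R] (X : Matrix.SpecialLinearGroup (Fin 2) R) : R :=
  X 0 0 + X 1 1

/-- trace of commutator -/
def kap {R : Type} [CommRing R] (X Y : Matrix.SpecialLinearGroup (Fin 2) R) : R :=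
  trc (X * Y * X⁻¹ * Y⁻¹)

/-- evaluation of integer trace polynomials -/
noncomputable def pev {R : Type} [CommRing R] (U V : Matrix.SpecialLinearGroup (Fin 2) R) :
    MvPolynomial (Fin 3) ℤ →+* R :=
  (MvPolynomial.aeval ![trc U, trc V, trc (U * V)]).toRingHom

theorem sl2_det {R : Type} [CommRing R] (X : Matrix.SpecialLinearGroup (Fin 2) R) :
    X 0 0 * X 1 1 - X 0 1 * X 1 0 = 1 := by
  have := X.det_coe
  rwa [Matrix.det_fin_two] at this

theorem sl2_ext {R : Type} [CommRing R] {X Y : Matrix.SpecialLinearGroup (Fin 2) R}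
    (h1 : X 0 0 = Y 0 0) (h2 : X 0 1 = Y 0 1) (h3 : X 1 0 = Y 1 0) (h4 : X 1 1 = Y 1 1) :
    X = Y := by
  ext i j
  fin_cases i <;> fin_cases j <;> assumption

section entries
variable {R : Type} [CommRing R] (X Y : Matrix.SpecialLinearGroup (Fin 2) R)
theorem mul00 : (X * Y) 0 0 = X 0 0 * Y 0 0 + X 0 1 * Y 1 0 := by
  simp [Matrix.SpecialLinearGroup.coe_mul, Matrix.mul_apply, Fin.sum_univ_two]
theorem mul01 : (X * Y) 0 1 = X 0 0 * Y 0 1 + X 0 1 * Y 1 1 := by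
  simp [Matrix.SpecialLinearGroup.coe_mul, Matrix.mul_apply, Fin.sum_univ_two]
theorem mul10 : (X * Y) 1 0 = X 1 0 * Y 0 0 + X 1 1 * Y 1 0 := by
  simp [Matrix.SpecialLinearGroup.coe_mul, Matrix.mul_apply, Fin.sum_univ_two]
theorem mul11 : (X * Y) 1 1 = X 1 0 * Y 0 1 + X 1 1 * Y 1 1 := by
  simp [Matrix.SpecialLinearGroup.coe_mul, Matrix.mul_apply, Fin.sum_univ_two]
theorem inv00 : (X⁻¹) 0 0 = X 1 1 := by
  simp [Matrix.SpecialLinearGroup.coe_inv, Matrix.adjugate_fin_two]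
theorem inv01 : (X⁻¹) 0 1 = - X 0 1 := by
  simp [Matrix.SpecialLinearGroup.coe_inv, Matrix.adjugate_fin_two]
theorem inv10 : (X⁻¹) 1 0 = - X 1 0 := by
  simp [Matrix.SpecialLinearGroup.coe_inv, Matrix.adjugate_fin_two]
theorem inv11 : (X⁻¹) 1 1 = X 0 0 := by
  simp [Matrix.SpecialLinearGroup.coe_inv, Matrix.adjugate_fin_two]
end entries

theorem kap_fricke {R : Type} [CommRing R] (U V : Matrix.SpecialLinearGroup (Fin 2) R) :
    kap U V = trc U ^ 2 + trc V ^ 2 + trc (U * V) ^ 2 - trc U * trc V * trc (U * V) - 2 := by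
  have h1 := sl2_det U
  have h2 := sl2_det V
  simp only [kap, trc, mul00, mul01, mul10, mul11, inv00, inv01, inv10, inv11]
  generalize U 0 0 = a at *
  generalize U 0 1 = b at *
  generalize U 1 0 = c at *
  generalize U 1 1 = d at *
  generalize V 0 0 = a' at *
  generalize V 0 1 = b' at *
  generalize V 1 0 = c' at *
  generalize V 1 1 = d' at *
  linear_combination (-2 * (a' * d' - b' * c') + (a'+d')^2) * h1 + ((a+d)^2 - 2) * h2

/-- coefficients form -/
def IsComb {R : Type} [CommRing R] (U V W : Matrix.SpecialLinearGroup (Fin 2) R)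
    (p0 p1 p2 p3 : R) : Prop :=
  W 0 0 = p0 + p1 * U 0 0 + p2 * V 0 0 + p3 * (U * V) 0 0 ∧
  W 0 1 = p1 * U 0 1 + p2 * V 0 1 + p3 * (U * V) 0 1 ∧
  W 1 0 = p1 * U 1 0 + p2 * V 1 0 + p3 * (U * V) 1 0 ∧
  W 1 1 = p0 + p1 * U 1 1 + p2 * V 1 1 + p3 * (U * V) 1 1

theorem comb_U {R : Type} [CommRing R] {U V W : Matrix.SpecialLinearGroup (Fin 2) R}
    {p0 p1 p2 p3 : R} (h : IsComb U V W p0 p1 p2 p3) :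
    IsComb U V (U * W) (-p1) (p0 + trc U * p1) (-p3) (p2 + trc U * p3) := by
  have h1 := sl2_det U
  obtain ⟨e1, e2, e3, e4⟩ := h
  simp only [IsComb, trc, mul00, mul01, mul10, mul11] at *
  rw [e1, e2, e3, e4]
  generalize U 0 0 = a at *
  generalize U 0 1 = b at *
  generalize U 1 0 = c at *
  generalize U 1 1 = d at *
  generalize V 0 0 = a' at *
  generalize V 0 1 = b' at *
  generalize V 1 0 = c' at *
  generalize V 1 1 = d' at *
  refine ⟨?_, ?_, ?_, ?_⟩
  · linear_combination (-p1 - p3 * a') * h1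
  · linear_combination (- p3 * b') * h1
  · linear_combination (- p3 * c') * h1
  · linear_combination (-p1 - p3 * d') * h1

theorem comb_V {R : Type} [CommRing R] {U V W : Matrix.SpecialLinearGroup (Fin 2) R}
    {p0 p1 p2 p3 : R} (h : IsComb U V W p0 p1 p2 p3) :
    IsComb U V (V * W) (p1 * (trc (U * V) - trc U * trc V) - p2 - trc U * p3)
      (p1 * trc V + p3) (p0 + p1 * trc U + trc V * p2 + trc (U * V) * p3) (-p1) := by
  have h2 := sl2_det V
  obtain ⟨e1, e2, e3, e4⟩ := h
  simp only [IsComb, trc, mul00, mul01, mul10, mul11] at *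
  rw [e1, e2, e3, e4]
  generalize U 0 0 = a at *
  generalize U 0 1 = b at *
  generalize U 1 0 = c at *
  generalize U 1 1 = d at *
  generalize V 0 0 = a' at *
  generalize V 0 1 = b' at *
  generalize V 1 0 = c' at *
  generalize V 1 1 = d' at *
  refine ⟨?_, ?_, ?_, ?_⟩
  · linear_combination (-p2 - p3 * d) * h2
  · linear_combination (p3 * b) * h2
  · linear_combination (p3 * c) * h2
  · linear_combination (-p2 - p3 * a) * h2

theorem comb_Uinv {R : Type} [CommRing R] {U V W : Matrix.SpecialLinearGroup (Fin 2) R}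
    {p0 p1 p2 p3 : R} (h : IsComb U V W p0 p1 p2 p3) :
    IsComb U V (U⁻¹ * W) (trc U * p0 + p1) (-p0) (trc U * p2 + p3) (- p2) := by
  obtain ⟨g1, g2, g3, g4⟩ := comb_U h
  obtain ⟨e1, e2, e3, e4⟩ := h
  simp only [IsComb, trc, mul00, mul01, mul10, mul11, inv00, inv01, inv10, inv11] at *
  refine ⟨?_, ?_, ?_, ?_⟩
  · linear_combination (U 0 0 + U 1 1) * e1 - g1
  · linear_combination (U 0 0 + U 1 1) * e2 - g2
  · linear_combination (U 0 0 + U 1 1) * e3 - g3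
  · linear_combination (U 0 0 + U 1 1) * e4 - g4

theorem comb_Vinv {R : Type} [CommRing R] {U V W : Matrix.SpecialLinearGroup (Fin 2) R}
    {p0 p1 p2 p3 : R} (h : IsComb U V W p0 p1 p2 p3) :
    IsComb U V (V⁻¹ * W)
      (trc V * p0 - (p1 * (trc (U * V) - trc U * trc V) - p2 - trc U * p3))
      (trc V * p1 - (p1 * trc V + p3))
      (trc V * p2 - (p0 + p1 * trc U + trc V * p2 + trc (U * V) * p3)) (trc V * p3 + p1) := by
  obtain ⟨g1, g2, g3, g4⟩ := comb_V h
  obtain ⟨e1, e2, e3, e4⟩ := h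
  simp only [IsComb, trc, mul00, mul01, mul10, mul11, inv00, inv01, inv10, inv11] at *
  refine ⟨?_, ?_, ?_, ?_⟩
  · linear_combination (V 0 0 + V 1 1) * e1 - g1
  · linear_combination (V 0 0 + V 1 1) * e2 - g2
  · linear_combination (V 0 0 + V 1 1) * e3 - g3
  · linear_combination (V 0 0 + V 1 1) * e4 - g4

theorem pev_X0 {R : Type} [CommRing R] (U V : Matrix.SpecialLinearGroup (Fin 2) R) :
    pev U V (MvPolynomial.X 0) = trc U := by simp [pev]
theorem pev_X1 {R : Type} [CommRing R] (U V : Matrix.SpecialLinearGroup (Fin 2) R) :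
    pev U V (MvPolynomial.X 1) = trc V := by simp [pev]
theorem pev_X2 {R : Type} [CommRing R] (U V : Matrix.SpecialLinearGroup (Fin 2) R) :
    pev U V (MvPolynomial.X 2) = trc (U * V) := by simp [pev]

theorem word_comb (w : FreeGroup Bool) : ∃ p0 p1 p2 p3 : MvPolynomial (Fin 3) ℤ,
    ∀ (R : Type) [CommRing R] (U V : Matrix.SpecialLinearGroup (Fin 2) R),
      IsComb U V (evw U V w) (pev U V p0) (pev U V p1) (pev U V p2) (pev U V p3) := by
  obtain ⟨L, rfl⟩ : ∃ L, FreeGroup.mk L = w := ⟨w.toWord, FreeGroup.mk_toWord⟩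
  induction L with
  | nil =>
    refine ⟨1, 0, 0, 0, fun R _ U V => ?_⟩
    have : evw U V (FreeGroup.mk []) = 1 := map_one _
    rw [this]
    simp [IsComb]
  | cons a L ih =>
    obtain ⟨p0, p1, p2, p3, ih⟩ := ih
    have key : ∀ (R : Type) [CommRing R] (U V : Matrix.SpecialLinearGroup (Fin 2) R),
      evw U V (FreeGroup.mk (a :: L)) =
        (bif a.2 then (bif a.1 then U else V) else (bif a.1 then U else V)⁻¹)
          * evw U V (FreeGroup.mk L) := by
      intro R _ U V
      simp [evw, FreeGroup.lift_mk]
    obtain ⟨i, b⟩ := a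
    cases i <;> cases b
    · refine ⟨MvPolynomial.X 1 * p0 - (p1 * (MvPolynomial.X 2 - MvPolynomial.X 0 * MvPolynomial.X 1) - p2 - MvPolynomial.X 0 * p3),
        MvPolynomial.X 1 * p1 - (p1 * MvPolynomial.X 1 + p3),
        MvPolynomial.X 1 * p2 - (p0 + p1 * MvPolynomial.X 0 + MvPolynomial.X 1 * p2 + MvPolynomial.X 2 * p3), MvPolynomial.X 1 * p3 + p1,
        fun R _ U V => ?_⟩
      rw [key]
      simp only [map_mul, map_add, map_sub, map_neg, pev_X0, pev_X1, pev_X2]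
      exact comb_Vinv (ih R U V)
    · refine ⟨p1 * (MvPolynomial.X 2 - MvPolynomial.X 0 * MvPolynomial.X 1) - p2 - MvPolynomial.X 0 * p3,
        p1 * MvPolynomial.X 1 + p3, p0 + p1 * MvPolynomial.X 0 + MvPolynomial.X 1 * p2 + MvPolynomial.X 2 * p3, -p1,
        fun R _ U V => ?_⟩
      rw [key]
      simp only [map_mul, map_add, map_sub, map_neg, pev_X0, pev_X1, pev_X2]
      exact comb_V (ih R U V)
    · refine ⟨MvPolynomial.X 0 * p0 + p1, -p0, MvPolynomial.X 0 * p2 + p3, -p2,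
        fun R _ U V => ?_⟩
      rw [key]
      simp only [map_mul, map_add, map_sub, map_neg, pev_X0, pev_X1, pev_X2]
      exact comb_Uinv (ih R U V)
    · refine ⟨-p1, p0 + MvPolynomial.X 0 * p1, -p3, p2 + MvPolynomial.X 0 * p3,
        fun R _ U V => ?_⟩
      rw [key]
      simp only [map_mul, map_add, map_sub, map_neg, pev_X0, pev_X1, pev_X2]
      exact comb_U (ih R U V)

theorem word_trace (w : FreeGroup Bool) : ∃ p : MvPolynomial (Fin 3) ℤ,
    ∀ (R : Type) [CommRing R] (U V : Matrix.SpecialLinearGroup (Fin 2) R),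
      trc (evw U V w) = pev U V p := by
  obtain ⟨p0, p1, p2, p3, h⟩ := word_comb w
  refine ⟨2 * p0 + p1 * MvPolynomial.X 0 + p2 * MvPolynomial.X 1 + p3 * MvPolynomial.X 2,
    fun R _ U V => ?_⟩
  obtain ⟨e1, e2, e3, e4⟩ := h R U V
  simp only [map_add, map_mul, pev_X0, pev_X1, pev_X2, map_ofNat]
  simp only [trc, e1, e4]
  ring

theorem kap_det {R : Type} [CommRing R] (X Y : Matrix.SpecialLinearGroup (Fin 2) R) :
    kap X Y - 2 = - ((X * Y).1 - (Y * X).1).det := by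
  have h1 := sl2_det X
  have h2 := sl2_det Y
  rw [Matrix.det_fin_two]
  change kap X Y - 2 = -(((X*Y) 0 0 - (Y*X) 0 0) * ((X*Y) 1 1 - (Y*X) 1 1) -
    ((X*Y) 0 1 - (Y*X) 0 1) * ((X*Y) 1 0 - (Y*X) 1 0))
  simp only [kap, trc, mul00, mul01, mul10, mul11, inv00, inv01, inv10, inv11]
  generalize X 0 0 = a at *
  generalize X 0 1 = b at *
  generalize X 1 0 = c at *
  generalize X 1 1 = d at *
  generalize Y 0 0 = a' at *
  generalize Y 0 1 = b' at *
  generalize Y 1 0 = c' at *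
  generalize Y 1 1 = d' at *
  linear_combination (2 * (a' * d' - b' * c')) * h1 + (2) * h2

theorem word_kap (w1 w2 : FreeGroup Bool) : ∃ d : MvPolynomial (Fin 3) ℤ,
    ∀ (R : Type) [CommRing R] (U V : Matrix.SpecialLinearGroup (Fin 2) R),
      kap (evw U V w1) (evw U V w2) - 2 = pev U V d * (kap U V - 2) := by
  obtain ⟨p0, p1, p2, p3, hp⟩ := word_comb w1
  obtain ⟨q0, q1, q2, q3, hq⟩ := word_comb w2
  refine ⟨(p1*q2-p2*q1)^2 + (p1*q3-p3*q1)^2 + (p2*q3-p3*q2)^2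
    + (p1*q2-p2*q1) * (p1*q3-p3*q1) * MvPolynomial.X 0
    - (p1*q2-p2*q1) * (p2*q3-p3*q2) * MvPolynomial.X 1
    - (p1*q3-p3*q1) * (p2*q3-p3*q2) * MvPolynomial.X 2, fun R _ U V => ?_⟩
  obtain ⟨e1, e2, e3, e4⟩ := hp R U V
  obtain ⟨f1, f2, f3, f4⟩ := hq R U V
  simp only [map_add, map_mul, map_sub, map_pow, pev_X0, pev_X1, pev_X2]
  rw [kap_det, kap_det]
  generalize evw U V w1 = X at *
  generalize evw U V w2 = Y at *
  generalize pev U V p0 = a0 at *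
  generalize pev U V p1 = a1 at *
  generalize pev U V p2 = a2 at *
  generalize pev U V p3 = a3 at *
  generalize pev U V q0 = b0 at *
  generalize pev U V q1 = b1 at *
  generalize pev U V q2 = b2 at *
  generalize pev U V q3 = b3 at *
  have h1 := sl2_det U
  have h2 := sl2_det V
  have L : (X * Y).1 - (Y * X).1 =
     !![(a1*b2-a2*b1) + (a1*b3-a3*b1) * U 0 0 - (a2*b3-a3*b2) * V 1 1,
        (a1*b3-a3*b1) * U 0 1 + (a2*b3-a3*b2) * V 0 1;
        (a1*b3-a3*b1) * U 1 0 + (a2*b3-a3*b2) * V 1 0,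
        (a1*b2-a2*b1) + (a1*b3-a3*b1) * U 1 1 - (a2*b3-a3*b2) * V 0 0] *
      ((U * V).1 - (V * U).1) := by
    ext i j
    rw [Matrix.mul_apply, Fin.sum_univ_two]
    fin_cases i <;> fin_cases j
    · change (X*Y) 0 0 - (Y*X) 0 0 = _ * ((U*V) 0 0 - (V*U) 0 0) + _ * ((U*V) 1 0 - (V*U) 1 0)
      simp [mul00, mul01, mul10, mul11, e1, e2, e3, e4, f1, f2, f3, f4]
      ring
    · change (X*Y) 0 1 - (Y*X) 0 1 = _ * ((U*V) 0 1 - (V*U) 0 1) + _ * ((U*V) 1 1 - (V*U) 1 1)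
      simp [mul00, mul01, mul10, mul11, e1, e2, e3, e4, f1, f2, f3, f4]
      ring
    · change (X*Y) 1 0 - (Y*X) 1 0 = _ * ((U*V) 0 0 - (V*U) 0 0) + _ * ((U*V) 1 0 - (V*U) 1 0)
      simp [mul00, mul01, mul10, mul11, e1, e2, e3, e4, f1, f2, f3, f4]
      ring
    · change (X*Y) 1 1 - (Y*X) 1 1 = _ * ((U*V) 0 1 - (V*U) 0 1) + _ * ((U*V) 1 1 - (V*U) 1 1)
      simp [mul00, mul01, mul10, mul11, e1, e2, e3, e4, f1, f2, f3, f4]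
      ring
  rw [L, Matrix.det_mul, mul_neg]
  congr 2
  rw [Matrix.det_fin_two_of]
  simp only [trc, mul00, mul11]
  linear_combination ((a1*b3-a3*b1)^2) * h1 + ((a2*b3-a3*b2)^2) * h2


theorem evw_true {H : Type} [Group H] (U V : H) : evw U V (FreeGroup.of true) = U := by
  simp [evw]
theorem evw_false {H : Type} [Group H] (U V : H) : evw U V (FreeGroup.of false) = V := by
  simp [evw]

theorem evw_map {H K : Type} [Group H] [Group K] (f : H →* K) (U V : H) (w : FreeGroup Bool) :
    f (evw U V w) = evw (f U) (f V) w := by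
  have : f.comp (evw U V) = evw (f U) (f V) := by
    apply FreeGroup.ext_hom
    intro b
    cases b <;> simp [evw]
  exact DFunLike.congr_fun this w

theorem evw_range {H : Type} [Group H] (U V : H) :
    (evw U V).range = Subgroup.closure {U, V} := by
  rw [evw, FreeGroup.range_lift_eq_closure]
  congr 1
  ext x
  simp [or_comm, eq_comm]

theorem psl_eq {F : Type} [Field F] {X Y : SL2 F}
    (h : (QuotientGroup.mk X : PSL2 F) = QuotientGroup.mk Y) : Y = X ∨ Y = -X := by
  rw [QuotientGroup.eq, Matrix.SpecialLinearGroup.mem_center_iff] at h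
  obtain ⟨r, hr, h⟩ := h
  have hr2 : r = 1 ∨ r = -1 := by
    have h2 : (r - 1) * (r + 1) = 0 := by
      simp only [Fintype.card_fin] at hr
      linear_combination hr
    rcases mul_eq_zero.1 h2 with h | h
    · left; linear_combination h
    · right; linear_combination h
  have hY : Y = X * (X⁻¹ * Y) := by group
  rcases hr2 with rfl | rfl
  · left
    have : X⁻¹ * Y = 1 := by
      apply Subtype.ext; rw [← h]; simp
    rw [hY, this, mul_one]
  · right
    have : X⁻¹ * Y = -1 := by
      apply Subtype.ext; rw [← h]; ext i j; fin_cases i <;> fin_cases j <;> simp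
    rw [hY, this]; simp

theorem psl_neg {F : Type} [Field F] (X : SL2 F) :
    (QuotientGroup.mk (-X) : PSL2 F) = QuotientGroup.mk X := by
  rw [QuotientGroup.eq, Matrix.SpecialLinearGroup.mem_center_iff]
  refine ⟨-1, by simp, ?_⟩
  have : (-X)⁻¹ * X = -1 := by
    rw [inv_mul_eq_iff_eq_mul]; simp
  rw [this]
  ext i j; fin_cases i <;> fin_cases j <;> simp

theorem neg_app {R : Type} [CommRing R] (X : Matrix.SpecialLinearGroup (Fin 2) R) (i j : Fin 2) :
    (-X) i j = - X i j := by
  simp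

theorem kap_pm {R : Type} [CommRing R] {X Y X' Y' : Matrix.SpecialLinearGroup (Fin 2) R}
    (hX : X' = X ∨ X' = -X) (hY : Y' = Y ∨ Y' = -Y) : kap X' Y' = kap X Y := by
  rcases hX with rfl | rfl <;> rcases hY with rfl | rfl <;>
  simp only [kap, trc, mul00, mul01, mul10, mul11, inv00, inv01, inv10, inv11, neg_app] <;> ring

/-- hom from cyclic group -/
def cycHom {H : Type} [Group H] (n : ℕ) (u : H) (hu : u ^ n = 1) : Cyc n →* H :=
  AddMonoidHom.toMultiplicativeLeft (ZMod.lift n ⟨zmultiplesHom (Additive H) (Additive.ofMul u), by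
    simp [← ofMul_pow, hu]⟩)

theorem cycHom_gen {H : Type} [Group H] (n : ℕ) (u : H) (hu : u ^ n = 1) :
    cycHom n u hu (Multiplicative.ofAdd 1) = u := by
  have := ZMod.lift_coe n ⟨zmultiplesHom (Additive H) (Additive.ofMul u), by
    simp [← ofMul_pow, hu]⟩ 1
  rw [Int.cast_one] at this
  have h2 : (zmultiplesHom (Additive H) (Additive.ofMul u)) 1 = Additive.ofMul u := by simp
  exact this.trans h2

/-- generator -/
def ga : Monoid.Coprod (Cyc 2) (Cyc 3) := Monoid.Coprod.inl (Multiplicative.ofAdd 1)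
/-- generator -/
def gb : Monoid.Coprod (Cyc 2) (Cyc 3) := Monoid.Coprod.inr (Multiplicative.ofAdd 1)

theorem ga_sq : ga ^ 2 = 1 := by
  rw [ga, ← map_pow, ← map_one Monoid.Coprod.inl]
  congr 1
theorem gb_cube : gb ^ 3 = 1 := by
  rw [gb, ← map_pow, ← map_one Monoid.Coprod.inr]
  congr 1

theorem cyc_pow (n : ℕ) [NeZero n] (x : Cyc n) : ∃ k : ℕ, x = (Multiplicative.ofAdd (1 : ZMod n)) ^ k := by
  refine ⟨(Multiplicative.toAdd x).val, ?_⟩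
  rw [← ofAdd_nsmul]
  simp

theorem gen_G : Subgroup.closure {ga, gb} = ⊤ := by
  rw [eq_top_iff]
  intro x _
  induction x using Monoid.Coprod.induction_on with
  | inl m =>
    obtain ⟨k, rfl⟩ := cyc_pow 2 m
    rw [map_pow]
    exact Subgroup.pow_mem _ (Subgroup.subset_closure (by simp [ga])) _
  | inr m =>
    obtain ⟨k, rfl⟩ := cyc_pow 3 m
    rw [map_pow]
    exact Subgroup.pow_mem _ (Subgroup.subset_closure (by simp [gb])) _
  | mul x y hx hy => exact Subgroup.mul_mem _ (hx trivial) (hy trivial)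

theorem evw_surj {H : Type} [Group H] {U V : H} (h : Subgroup.closure {U, V} = ⊤) (x : H) :
    ∃ w, evw U V w = x := by
  rw [← evw_range] at h
  exact MonoidHom.mem_range.1 (h ▸ Subgroup.mem_top x)

theorem exists_hom {H : Type} [Group H] (u v : H) (hu : u ^ 2 = 1) (hv : v ^ 3 = 1) :
    ∃ φ : Monoid.Coprod (Cyc 2) (Cyc 3) →* H, φ ga = u ∧ φ gb = v := by
  refine ⟨Monoid.Coprod.lift (cycHom 2 u hu) (cycHom 3 v hv), ?_, ?_⟩
  · rw [ga, Monoid.Coprod.lift_apply_inl, cycHom_gen]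
  · rw [gb, Monoid.Coprod.lift_apply_inr, cycHom_gen]

/-- build elements -/
def sl {R : Type} [CommRing R] (a b c d : R) (h : a * d - b * c = 1) :
    Matrix.SpecialLinearGroup (Fin 2) R :=
  ⟨!![a, b; c, d], by rw [Matrix.det_fin_two_of]; exact h⟩

section sl
variable {R : Type} [CommRing R] (a b c d : R) (h : a * d - b * c = 1)
theorem sl00 : sl a b c d h 0 0 = a := rfl
theorem sl01 : sl a b c d h 0 1 = b := rfl
theorem sl10 : sl a b c d h 1 0 = c := rfl
theorem sl11 : sl a b c d h 1 1 = d := rfl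
end sl

theorem sq_of_trc {R : Type} [CommRing R] {A : Matrix.SpecialLinearGroup (Fin 2) R}
    (h : trc A = 0) : A ^ 2 = -1 := by
  have h1 := sl2_det A
  rw [trc] at h
  rw [sq]
  apply sl2_ext <;> simp only [mul00, mul01, mul10, mul11, neg_app] <;> simp
  · linear_combination A 0 0 * h - h1
  · linear_combination A 0 1 * h
  · linear_combination A 1 0 * h
  · linear_combination A 1 1 * h - h1

theorem cube_of_trc {R : Type} [CommRing R] {A : Matrix.SpecialLinearGroup (Fin 2) R}
    (h : trc A = 1) : A ^ 3 = -1 := by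
  have h1 := sl2_det A
  rw [trc] at h
  have h2 : A 1 1 = 1 - A 0 0 := by linear_combination h
  rw [pow_succ, sq]
  rw [h2] at h1
  apply sl2_ext <;> simp only [mul00, mul01, mul10, mul11, neg_app, h2] <;> simp
  · linear_combination (-A 0 0 - 1) * h1
  · linear_combination (- A 0 1) * h1
  · linear_combination (- A 1 0) * h1
  · linear_combination (A 0 0 - 2) * h1


theorem exists_AB (t : ℂ) : ∃ A B : SL2 ℂ, trc A = 0 ∧ trc B = 1 ∧ trc (A * B) = t := by
  obtain ⟨y, hy⟩ : ∃ y : ℂ, y ^ 2 - t * y + 1 = 0 := by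
    obtain ⟨s, hs⟩ := IsAlgClosed.exists_pow_nat_eq (t ^ 2 - 4) (n := 2) (by norm_num)
    exact ⟨(t + s) / 2, by linear_combination hs / 4⟩
  have hy0 : y ≠ 0 := by
    rintro rfl
    simp at hy
  refine ⟨sl 0 (-1) 1 0 (by ring), sl 0 y (-y⁻¹) 1 (by field_simp; ring), ?_, ?_, ?_⟩
  · simp [trc, sl00, sl11]
  · simp [trc, sl00, sl11]
  · simp only [trc, mul00, mul11, sl00, sl01, sl10, sl11]
    field_simp
    linear_combination hy

/-- special unitary matrices -/
def su2 : Subgroup (SL2 ℂ) where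
  carrier := {X | X 1 1 = starRingEnd ℂ (X 0 0) ∧ X 1 0 = - starRingEnd ℂ (X 0 1)}
  one_mem' := by simp
  mul_mem' := by
    rintro X Y ⟨h1, h2⟩ ⟨h3, h4⟩
    simp only [Set.mem_ofPred_eq, mul00, mul01, mul10, mul11, h1, h2, h3, h4, map_add, map_mul,
      map_neg, Complex.conj_conj]
    constructor <;> ring
  inv_mem' := by
    rintro X ⟨h1, h2⟩
    simp only [Set.mem_ofPred_eq, inv00, inv01, inv10, inv11, h1, h2, map_neg, Complex.conj_conj]
    simp

theorem su2_trc {X : SL2 ℂ} (h : X ∈ su2) : trc X ≠ 5 := by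
  obtain ⟨h1, h2⟩ := h
  have h3 := sl2_det X
  intro h5
  rw [trc] at h5
  rw [h1] at h3 h5
  rw [h2] at h3
  have e3 := congrArg Complex.re h3
  have e5 := congrArg Complex.re h5
  simp at e3 e5
  nlinarith [sq_nonneg ((X 0 0).im), sq_nonneg ((X 0 1).re), sq_nonneg ((X 0 1).im)]

theorem exists_su : ∃ A B : SL2 ℂ, A ∈ su2 ∧ B ∈ su2 ∧ trc A = 0 ∧ trc B = 1 ∧
    trc (A * B) = 0 := by
  have hs : ((Real.sqrt 3 : ℝ) : ℂ) ^ 2 = 3 := by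
    rw [← Complex.ofReal_pow, Real.sq_sqrt (by norm_num)]; norm_num
  refine ⟨sl Complex.I 0 0 (-Complex.I) (by simp),
    sl (1/2) (((Real.sqrt 3 : ℝ) : ℂ)/2) (-(((Real.sqrt 3 : ℝ) : ℂ)/2)) (1/2)
      (by linear_combination hs / 4), ?_, ?_, ?_, ?_, ?_⟩
  · constructor <;> simp [sl00, sl01, sl10, sl11]
  · have h2 : (starRingEnd ℂ) 2 = 2 := Complex.conj_ofNat 2
    constructor <;> simp [sl00, sl01, sl10, sl11, h2]
  · simp [trc, sl00, sl11]
  · simp only [trc, sl00, sl11]; norm_num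
  · simp only [trc, mul00, mul11, sl00, sl01, sl10, sl11]; ring

theorem kap_AB {R : Type} [CommRing R] {A B : Matrix.SpecialLinearGroup (Fin 2) R}
    (hA : trc A = 0) (hB : trc B = 1) : kap A B = trc (A * B) ^ 2 - 1 := by
  rw [kap_fricke, hA, hB]; ring

/-- specialise -/
noncomputable def spc : MvPolynomial (Fin 3) ℤ →+* Polynomial ℤ :=
  (MvPolynomial.aeval ![0, 1, Polynomial.X]).toRingHom

theorem pev_spc {R : Type} [CommRing R] {A B : Matrix.SpecialLinearGroup (Fin 2) R}
    (hA : trc A = 0) (hB : trc B = 1) (p : MvPolynomial (Fin 3) ℤ) :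
    pev A B p = Polynomial.aeval (trc (A * B)) (spc p) := by
  have : pev A B = ((Polynomial.aeval (trc (A * B))).toRingHom : Polynomial ℤ →+* R).comp spc := by
    apply MvPolynomial.ringHom_ext
    · intro r; simp [pev, spc]
    · intro i
      fin_cases i <;> simp [pev, spc, hA, hB]
  rw [this]; rfl

theorem pev_word {R : Type} [CommRing R] (A B X Y : Matrix.SpecialLinearGroup (Fin 2) R)
    (τ1 τ2 τ3 : MvPolynomial (Fin 3) ℤ) (h1 : trc X = pev A B τ1) (h2 : trc Y = pev A B τ2)
    (h3 : trc (X * Y) = pev A B τ3) (d : MvPolynomial (Fin 3) ℤ) :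
    pev X Y d = pev A B (MvPolynomial.aeval ![τ1, τ2, τ3] d) := by
  have : pev X Y = (pev A B).comp
      (MvPolynomial.aeval ![τ1, τ2, τ3] : MvPolynomial (Fin 3) ℤ →ₐ[ℤ] _).toRingHom := by
    apply MvPolynomial.ringHom_ext
    · intro r; simp [pev]
    · intro i
      fin_cases i
      · simp [pev_X0, h1]
      · simp [pev_X1, h2]
      · simp [pev_X2, h3]
  rw [this]; rfl

theorem kmain (g1 g2 : Monoid.Coprod (Cyc 2) (Cyc 3)) (hg : Subgroup.closure {g1, g2} = ⊤) :
    ∃ w1 w2 : FreeGroup Bool, evw ga gb w1 = g1 ∧ evw ga gb w2 = g2 ∧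
      ∀ (R : Type) [CommRing R] (A B : Matrix.SpecialLinearGroup (Fin 2) R),
        trc A = 0 → trc B = 1 →
        kap (evw A B w1) (evw A B w2) = trc (A * B) ^ 2 - 1 := by
  obtain ⟨w1, hw1⟩ := evw_surj gen_G g1
  obtain ⟨w2, hw2⟩ := evw_surj gen_G g2
  obtain ⟨v1, hv1⟩ := evw_surj hg ga
  obtain ⟨v2, hv2⟩ := evw_surj hg gb
  refine ⟨w1, w2, hw1, hw2, ?_⟩
  obtain ⟨d1, hd1⟩ := word_kap w1 w2
  obtain ⟨d2, hd2⟩ := word_kap v1 v2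
  obtain ⟨τ1, hτ1⟩ := word_trace w1
  obtain ⟨τ2, hτ2⟩ := word_trace w2
  obtain ⟨τ3, hτ3⟩ := word_trace (w1 * w2)
  set D1 := spc d1 with hD1
  set D2 := spc (MvPolynomial.aeval ![τ1, τ2, τ3] d2) with hD2
  have key : ∀ t : ℂ, t ^ 2 - 3 = Polynomial.aeval t D2 * (Polynomial.aeval t D1 * (t ^ 2 - 3)) := by
    intro t
    obtain ⟨A, B, hA, hB, ht⟩ := exists_AB t
    have hA2 : (QuotientGroup.mk A : PSL2 ℂ) ^ 2 = 1 := by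
      rw [← QuotientGroup.mk_pow, sq_of_trc hA, psl_neg]; rfl
    have hB2 : (QuotientGroup.mk B : PSL2 ℂ) ^ 3 = 1 := by
      rw [← QuotientGroup.mk_pow, cube_of_trc hB, psl_neg]; rfl
    obtain ⟨φ, hφa, hφb⟩ := exists_hom _ _ hA2 hB2
    set X := evw A B w1 with hX
    set Y := evw A B w2 with hY
    have e1 : φ g1 = QuotientGroup.mk X := by
      rw [← hw1, evw_map, hφa, hφb]
      exact (evw_map (QuotientGroup.mk' (Subgroup.center (SL2 ℂ))) A B w1).symm
    have e2 : φ g2 = QuotientGroup.mk Y := by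
      rw [← hw2, evw_map, hφa, hφb]
      exact (evw_map (QuotientGroup.mk' (Subgroup.center (SL2 ℂ))) A B w2).symm
    have e3 : (QuotientGroup.mk (evw X Y v1) : PSL2 ℂ) = QuotientGroup.mk A := by
      rw [← hφa, ← hv1, evw_map, e1, e2]
      exact (evw_map (QuotientGroup.mk' (Subgroup.center (SL2 ℂ))) X Y v1)
    have e4 : (QuotientGroup.mk (evw X Y v2) : PSL2 ℂ) = QuotientGroup.mk B := by
      rw [← hφb, ← hv2, evw_map, e1, e2]
      exact (evw_map (QuotientGroup.mk' (Subgroup.center (SL2 ℂ))) X Y v2)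
    have e5 := kap_pm (psl_eq e3) (psl_eq e4)
    have e6 := hd2 ℂ X Y
    rw [← e5, hd1 ℂ A B, pev_word A B X Y τ1 τ2 τ3 (hτ1 ℂ A B) (hτ2 ℂ A B)
      (by rw [← hτ3 ℂ A B, map_mul]) d2, pev_spc hA hB, pev_spc hA hB, kap_AB hA hB, ht] at e6
    linear_combination e6
  have key2 : (Polynomial.X ^ 2 - 3 : Polynomial ℤ) = D2 * (D1 * (Polynomial.X ^ 2 - 3)) := by
    apply Polynomial.map_injective (Int.castRingHom ℂ) (RingHom.injective_int _)
    apply Polynomial.funext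
    intro t
    have := key t
    rw [Polynomial.aeval_def, Polynomial.aeval_def, Polynomial.eval₂_eq_eval_map,
      Polynomial.eval₂_eq_eval_map] at this
    simpa using this
  have hne : (Polynomial.X ^ 2 - 3 : Polynomial ℤ) ≠ 0 := by
    intro h
    have := congrArg (Polynomial.eval 0) h
    simp at this
  have hu : D1 * D2 = 1 := by
    apply mul_right_cancel₀ hne
    rw [one_mul]
    conv_rhs => rw [key2]
    ring
  obtain ⟨u, hu1, hu2⟩ := Polynomial.isUnit_iff.1 (IsUnit.of_mul_eq_one _ hu)
  have hD : ∀ (R : Type) [CommRing R] (A B : Matrix.SpecialLinearGroup (Fin 2) R),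
      trc A = 0 → trc B = 1 →
      kap (evw A B w1) (evw A B w2) - 2 = u * (trc (A * B) ^ 2 - 3) := by
    intro R _ A B hA hB
    rw [hd1 R A B, pev_spc hA hB, kap_AB hA hB, ← hD1, ← hu2]
    simp
    ring
  have hu3 : u = 1 := by
    rcases Int.isUnit_iff.1 hu1 with h | h
    · exact h
    · exfalso
      obtain ⟨A, B, hA', hB', hA, hB, hAB⟩ := exists_su
      have := hD ℂ A B hA hB
      rw [h, hAB] at this
      have hw : ∀ w, evw A B w ∈ su2 := by
        intro w
        have h1 : (evw A B).range ≤ su2 := by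
          rw [evw_range, Subgroup.closure_le]
          rintro x (rfl | rfl) <;> assumption
        exact h1 ⟨w, rfl⟩
      refine su2_trc (X := evw A B w1 * evw A B w2 * (evw A B w1)⁻¹ * (evw A B w2)⁻¹) ?_ ?_
      · exact su2.mul_mem (su2.mul_mem (su2.mul_mem (hw _) (hw _)) (su2.inv_mem (hw _)))
          (su2.inv_mem (hw _))
      · change kap _ _ = 5
        push_cast at this
        linear_combination this
  intro R _ A B hA hB
  have := hD R A B hA hB
  rw [hu3] at this
  push_cast at this
  linear_combination this

theorem scalar_kap {R : Type} [CommRing R] {A B : Matrix.SpecialLinearGroup (Fin 2) R}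
    (h : ∀ C : Matrix.SpecialLinearGroup (Fin 2) R, A * C = C * A) :
    kap A B = 2 ∧ kap B A = 2 := by
  have h1 : A * B * A⁻¹ * B⁻¹ = 1 := by rw [h B]; group
  have h2 : B * A * B⁻¹ * A⁻¹ = 1 := by rw [← h B]; group
  rw [kap, kap, h1, h2]
  simp [trc]; norm_num

theorem comm_of_scalar {R : Type} [CommRing R] {A : Matrix.SpecialLinearGroup (Fin 2) R}
    (h1 : A 0 1 = 0) (h2 : A 1 0 = 0) (h3 : A 0 0 = A 1 1)
    (C : Matrix.SpecialLinearGroup (Fin 2) R) : A * C = C * A := by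
  apply sl2_ext <;> simp only [mul00, mul01, mul10, mul11, h1, h2, h3] <;> ring

theorem comm_of_eq {F : Type} [Field F] {A D : SL2 F} {x y : F} (hx : x ≠ 0)
    (hD : D = 1 ∨ D = -1)
    (e1 : D 0 0 = x * A 0 0 + y) (e2 : D 0 1 = x * A 0 1) (e3 : D 1 0 = x * A 1 0)
    (e4 : D 1 1 = x * A 1 1 + y) (C : SL2 F) : A * C = C * A := by
  have h1 : D 0 1 = 0 ∧ D 1 0 = 0 ∧ D 0 0 = D 1 1 := by
    rcases hD with rfl | rfl <;> simp
  obtain ⟨h1, h2, h3⟩ := h1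
  refine comm_of_scalar ?_ ?_ ?_ C
  · rw [h1] at e2; simpa [hx] using e2.symm
  · rw [h2] at e3; simpa [hx] using e3.symm
  · apply mul_left_cancel₀ hx
    linear_combination h3 - e1 + e4

theorem obstruct {F : Type} [Field F] (θ : Monoid.Coprod (Cyc 2) (Cyc 3) →* PSL2 F)
    (g1 g2 : Monoid.Coprod (Cyc 2) (Cyc 3)) (hg : Subgroup.closure {g1, g2} = ⊤)
    (X0 Y0 : SL2 F) (h1 : θ g1 = QuotientGroup.mk X0) (h2 : θ g2 = QuotientGroup.mk Y0)
    (hk : kap X0 Y0 ≠ 2) :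
    ∃ (A B : SL2 F) (w1 w2 : FreeGroup Bool), trc A = 0 ∧ trc B = 1 ∧
      kap X0 Y0 = trc (A * B) ^ 2 - 1 ∧ (X0 = evw A B w1 ∨ X0 = - evw A B w1) ∧
      (Y0 = evw A B w2 ∨ Y0 = - evw A B w2) := by
  obtain ⟨w1, w2, hw1, hw2, H⟩ := kmain g1 g2 hg
  have main : ∀ A B : SL2 F, θ ga = QuotientGroup.mk A → θ gb = QuotientGroup.mk B →
      (X0 = evw A B w1 ∨ X0 = - evw A B w1) ∧ (Y0 = evw A B w2 ∨ Y0 = - evw A B w2) := by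
    intro A B hA hB
    constructor
    · apply psl_eq
      rw [← h1, ← hw1, evw_map, hA, hB]
      exact (evw_map (QuotientGroup.mk' (Subgroup.center (SL2 F))) A B w1)
    · apply psl_eq
      rw [← h2, ← hw2, evw_map, hA, hB]
      exact (evw_map (QuotientGroup.mk' (Subgroup.center (SL2 F))) A B w2)
  obtain ⟨A, hA⟩ := QuotientGroup.mk_surjective (θ ga)
  obtain ⟨B, hB⟩ := QuotientGroup.mk_surjective (θ gb)
  have hk2 : kap A B ≠ 2 := by
    intro h
    obtain ⟨m1, m2⟩ := main A B hA.symm hB.symm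
    obtain ⟨d, hd⟩ := word_kap w1 w2
    have := hd F A B
    rw [← kap_pm m1 m2, h] at this
    apply hk
    linear_combination this
  have hA2 : A ^ 2 = 1 ∨ A ^ 2 = -1 := by
    apply psl_eq
    rw [QuotientGroup.mk_pow, hA, ← map_pow, ga_sq, map_one]; rfl
  have hB3 : B ^ 3 = 1 ∨ B ^ 3 = -1 := by
    apply psl_eq
    rw [QuotientGroup.mk_pow, hB, ← map_pow, gb_cube, map_one]; rfl
  have tA : trc A = 0 := by
    by_contra hx
    apply hk2
    refine (scalar_kap (comm_of_eq hx hA2 (y := -1) ?_ ?_ ?_ ?_)).1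
    all_goals
      have h := sl2_det A
      simp only [sq, mul00, mul01, mul10, mul11, trc]
    · linear_combination -h
    · ring
    · ring
    · linear_combination -h
  have tB : trc B ^ 2 - 1 = 0 := by
    by_contra hx
    apply hk2
    refine (scalar_kap (comm_of_eq hx hB3 (y := - trc B) ?_ ?_ ?_ ?_)).2
    all_goals
      have h := sl2_det B
      simp only [pow_succ, pow_zero, one_mul, mul00, mul01, mul10, mul11, trc]
    · linear_combination (-(2 * B 0 0 + B 1 1)) * h
    · linear_combination (-(B 0 1)) * h
    · linear_combination (-(B 1 0)) * h
    · linear_combination (-(2 * B 1 1 + B 0 0)) * h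
  have tB2 : (trc B - 1) * (trc B + 1) = 0 := by linear_combination tB
  rcases mul_eq_zero.1 tB2 with h | h
  · have tB : trc B = 1 := by linear_combination h
    obtain ⟨m1, m2⟩ := main A B hA.symm hB.symm
    exact ⟨A, B, w1, w2, tA, tB, by rw [kap_pm m1 m2]; exact H F A B tA tB, m1, m2⟩
  · have tB : trc (-B) = 1 := by
      rw [trc, neg_app, neg_app]
      rw [trc] at h
      linear_combination -h
    obtain ⟨m1, m2⟩ := main A (-B) hA.symm (by rw [psl_neg, hB])
    exact ⟨A, -B, w1, w2, tA, tB, by rw [kap_pm m1 m2]; exact H F A _ tA tB, m1, m2⟩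

/-- odd obstruction -/
theorem obs_odd {F : Type} [Field F] (X0 Y0 : SL2 F) (hk : kap X0 Y0 ≠ 2)
    (hs : ¬ IsSquare (kap X0 Y0 + 1)) (θ : Monoid.Coprod (Cyc 2) (Cyc 3) →* PSL2 F)
    (g1 g2 : Monoid.Coprod (Cyc 2) (Cyc 3)) (hg : Subgroup.closure {g1, g2} = ⊤) :
    (θ g1, θ g2) ≠ (QuotientGroup.mk X0, QuotientGroup.mk Y0) := by
  intro h
  obtain ⟨h1, h2⟩ := Prod.mk.inj h
  obtain ⟨A, B, w1, w2, _, _, h3, _⟩ := obstruct θ g1 g2 hg X0 Y0 h1 h2 hk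
  exact hs ⟨trc (A * B), by rw [h3]; ring⟩

/-- even obstruction -/
theorem obs_even {F : Type} [Field F] (X0 Y0 : SL2 F) (hk : kap X0 Y0 ≠ 2)
    (hs : kap X0 Y0 + 1 = 0) (ht : (∀ n : ℤ, trc X0 ≠ n) ∨ (∀ n : ℤ, trc Y0 ≠ n))
    (θ : Monoid.Coprod (Cyc 2) (Cyc 3) →* PSL2 F)
    (g1 g2 : Monoid.Coprod (Cyc 2) (Cyc 3)) (hg : Subgroup.closure {g1, g2} = ⊤) :
    (θ g1, θ g2) ≠ (QuotientGroup.mk X0, QuotientGroup.mk Y0) := by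
  intro h
  obtain ⟨h1, h2⟩ := Prod.mk.inj h
  obtain ⟨A, B, w1, w2, hA, hB, h3, m1, m2⟩ := obstruct θ g1 g2 hg X0 Y0 h1 h2 hk
  have h4 : trc (A * B) = 0 := by
    have : trc (A * B) ^ 2 = 0 := by linear_combination hs - h3
    exact pow_eq_zero_iff (two_ne_zero) |>.1 this
  have key : ∀ (X : SL2 F) (w : FreeGroup Bool), (X = evw A B w ∨ X = - evw A B w) →
      ∃ n : ℤ, trc X = n := by
    intro X w hX
    obtain ⟨p, hp⟩ := word_trace w
    have h5 := hp F A B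
    rw [pev_spc hA hB, h4] at h5
    have h6 : trc (evw A B w) = (((spc p).eval 0 : ℤ) : F) := by
      rw [h5, Polynomial.aeval_def, ← Int.cast_zero, Polynomial.eval₂_at_intCast]; simp
    rcases hX with rfl | rfl
    · exact ⟨_, h6⟩
    · refine ⟨-(spc p).eval 0, ?_⟩
      rw [Int.cast_neg, ← h6]
      simp only [trc, neg_app]; ring
  rcases ht with ht | ht
  · obtain ⟨n, hn⟩ := key _ _ m1
    exact ht n hn
  · obtain ⟨n, hn⟩ := key _ _ m2
    exact ht n hn


/-- unipotent -/
def uu {F : Type} [Field F] (x : F) : SL2 F := sl 1 x 0 1 (by ring)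

/-- torus -/
def dd {F : Type} [Field F] (x : F) (hx : x ≠ 0) : SL2 F := sl x 0 0 x⁻¹ (by field_simp; simp)

/-- Weyl element -/
def ww {F : Type} [Field F] (c : F) (hc : c ≠ 0) : SL2 F :=
  sl 0 (-c⁻¹) c 0 (by field_simp; ring)

theorem gen_upper {F : Type} [Field F] (M : Subgroup (SL2 F)) (hU : ∀ x, uu x ∈ M)
    (g : SL2 F) (hg : g ∈ M) (hc : g 1 0 ≠ 0) : M = ⊤ := by
  have bruhat : ∀ (h : SL2 F) (h0 : h 1 0 ≠ 0), ∃ x y, h = uu x * ww (h 1 0) h0 * uu y := by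
    intro h h0
    have hd := sl2_det h
    refine ⟨h 0 0 * (h 1 0)⁻¹, h 1 1 * (h 1 0)⁻¹, ?_⟩
    apply sl2_ext <;> simp only [uu, ww, mul00, mul01, mul10, mul11, sl00, sl01, sl10, sl11] <;>
      field_simp
    · ring
    · linear_combination -hd
    · ring
    · ring
  have hw : ∃ c : F, ∃ h : c ≠ 0, ww c h ∈ M := by
    obtain ⟨x, y, h⟩ := bruhat g hc
    refine ⟨g 1 0, hc, ?_⟩
    have : ww (g 1 0) hc = (uu x)⁻¹ * g * (uu y)⁻¹ := by
      conv_rhs => rw [h]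
      group
    rw [this]
    exact M.mul_mem (M.mul_mem (M.inv_mem (hU _)) hg) (M.inv_mem (hU _))
  obtain ⟨c, hc0, hw⟩ := hw
  have hL : ∀ z : F, sl 1 0 z 1 (by ring) ∈ M := by
    intro z
    have := M.mul_mem (M.mul_mem hw (hU (-z / c ^ 2))) (M.inv_mem hw)
    convert this using 1
    apply sl2_ext <;> simp only [uu, ww, mul00, mul01, mul10, mul11, inv00, inv01, inv10, inv11,
      sl00, sl01, sl10, sl11] <;> field_simp <;> ring
  have hN : ∀ h : SL2 F, h 1 0 ≠ 0 → h ∈ M := by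
    intro h h0
    have hd := sl2_det h
    have := M.mul_mem (M.mul_mem (hU ((h 0 0 - 1) / h 1 0)) (hL (h 1 0))) (hU ((h 1 1 - 1) / h 1 0))
    convert this using 1
    apply sl2_ext <;> simp only [uu, mul00, mul01, mul10, mul11, sl00, sl01, sl10, sl11] <;>
      field_simp
    · ring
    · linear_combination -hd
    · ring
    · ring
  rw [eq_top_iff]
  intro h _
  by_cases h0 : h 1 0 = 0
  · have hd := sl2_det h
    rw [h0] at hd
    have h00 : h 0 0 ≠ 0 := by
      intro h1
      rw [h1] at hd
      simp at hd
    have : g * h ∈ M := by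
      apply hN
      rw [mul10, h0]
      simp [hc, h00]
    have := M.mul_mem (M.inv_mem hg) this
    simpa using this
  · exact hN h h0

/-- generator of the multiplicative group -/
def IsG {F : Type} [Field F] (l : F) : Prop := ∀ x : F, x ≠ 0 → ∃ n : ℕ, x = l ^ n

theorem dd_pow {F : Type} [Field F] (l : F) (hl : l ≠ 0) (n : ℕ) :
    (dd l hl) ^ n = dd (l ^ n) (pow_ne_zero n hl) := by
  induction n with
  | zero => apply sl2_ext <;> simp [dd, sl00, sl01, sl10, sl11]
  | succ n ih =>
    rw [pow_succ, ih]
    apply sl2_ext <;> simp only [dd, mul00, mul01, mul10, mul11, sl00, sl01, sl10, sl11] <;>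
      field_simp <;> ring

theorem dd_mem {F : Type} [Field F] {l : F} (hl : l ≠ 0) (hg : IsG l) {M : Subgroup (SL2 F)}
    (hM : dd l hl ∈ M) (x : F) (hx : x ≠ 0) : dd x hx ∈ M := by
  obtain ⟨n, rfl⟩ := hg x hx
  rw [← dd_pow]
  exact M.pow_mem hM n

theorem sq_diff {F : Type} [Field F] [Fintype F] (x : F) : ∃ u v : F, x = u ^ 2 - v ^ 2 := by
  by_cases h2 : ringChar F = 2
  · obtain ⟨r, hr⟩ := FiniteField.isSquare_of_char_two h2 x
    exact ⟨r, 0, by rw [hr]; ring⟩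
  · have h2 : (2 : F) ≠ 0 := Ring.two_ne_zero h2
    exact ⟨(x + 1) / 2, (x - 1) / 2, by field_simp; ring⟩

theorem uu_mul {F : Type} [Field F] (x y : F) : uu x * uu y = uu (x + y) := by
  apply sl2_ext <;> simp [uu, mul00, mul01, mul10, mul11, sl00, sl01, sl10, sl11]; ring

theorem uu_inv {F : Type} [Field F] (x : F) : (uu x)⁻¹ = uu (-x) := by
  apply sl2_ext <;> simp only [uu, inv00, inv01, inv10, inv11, sl00, sl01, sl10, sl11]; simp

theorem uu_zero {F : Type} [Field F] : uu (0 : F) = 1 := by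
  apply sl2_ext <;> simp [uu, sl00, sl01, sl10, sl11]

theorem torus_uu {F : Type} [Field F] [Fintype F] {l : F} (hl : l ≠ 0) (hg : IsG l)
    {M : Subgroup (SL2 F)} (hM : dd l hl ∈ M) (s : F) (hs : s ≠ 0) (hu : uu s ∈ M) (x : F) :
    uu x ∈ M := by
  have h1 : ∀ m : F, uu (s * m ^ 2) ∈ M := by
    intro m
    by_cases hm : m = 0
    · rw [hm]; simp [uu_zero, M.one_mem]
    · have hd := dd_mem hl hg hM m hm
      have := M.mul_mem (M.mul_mem hd hu) (M.inv_mem hd)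
      convert this using 1
      apply sl2_ext <;> simp only [uu, dd, mul00, mul01, mul10, mul11, inv00, inv01, inv10, inv11,
        sl00, sl01, sl10, sl11] <;> field_simp <;> ring
  obtain ⟨u, v, h⟩ := sq_diff (x / s)
  have : uu x = uu (s * u ^ 2) * (uu (s * v ^ 2))⁻¹ := by
    rw [uu_inv, uu_mul]
    congr 1
    field_simp at h
    linear_combination h
  rw [this]
  exact M.mul_mem (h1 u) (M.inv_mem (h1 v))

theorem gen_a {F : Type} [Field F] [Fintype F] {l : F} (hl : l ≠ 0) (hg : IsG l) (hl2 : l ^ 2 ≠ 1)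
    {M : Subgroup (SL2 F)} (hM : dd l hl ∈ M) (g : SL2 F) (hgM : g ∈ M) (hc : g 1 0 ≠ 0)
    (h : SL2 F) (hh : h ∈ M) (h00 : h 0 0 = 0) (h11 : h 1 1 ≠ 0) : M = ⊤ := by
  refine gen_upper M (torus_uu hl hg hM (l * h 0 1 * h 1 1 * (l - l⁻¹)) ?_ ?_) g hgM hc
  · have hd := sl2_det h
    rw [h00] at hd
    have h01 : h 0 1 ≠ 0 := by
      intro h1
      rw [h1] at hd
      simp at hd
    have : l - l⁻¹ ≠ 0 := by
      intro h1
      field_simp at h1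
      exact hl2 (by linear_combination h1)
    positivity
  · have := M.mul_mem hM (M.mul_mem (M.mul_mem (M.inv_mem hh) hM) hh)
    have hd := sl2_det h
    rw [h00] at hd
    convert this using 1
    apply sl2_ext <;> simp only [uu, dd, mul00, mul01, mul10, mul11, inv00, inv01, inv10, inv11,
        sl00, sl01, sl10, sl11, h00] <;> field_simp
    · linear_combination -l * hd
    · ring
    · ring
    · linear_combination -l^2 * hd

theorem gen_b {F : Type} [Field F] [Fintype F] {l : F} (hl : l ≠ 0) (hg : IsG l)
    {M : Subgroup (SL2 F)} (hM : dd l hl ∈ M) (g : SL2 F) (hgM : g ∈ M) (hc : g 1 0 ≠ 0)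
    (h : SL2 F) (hh : h ∈ M) (h10 : h 1 0 = 0) (h01 : h 0 1 ≠ 0) : M = ⊤ := by
  have hd := sl2_det h
  rw [h10] at hd
  have h00 : h 0 0 ≠ 0 := by
    intro h1
    rw [h1] at hd
    simp at hd
  refine gen_upper M (torus_uu hl hg hM (h 0 1 / h 0 0) (div_ne_zero h01 h00) ?_) g hgM hc
  have := M.mul_mem (M.inv_mem (dd_mem hl hg hM _ h00)) hh
  convert this using 1
  apply sl2_ext <;> simp only [uu, dd, mul00, mul01, mul10, mul11, inv00, inv01, inv10, inv11,
        sl00, sl01, sl10, sl11, h10] <;> field_simp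
  · ring
  · ring
  · ring
  · linear_combination -hd

theorem exists_isG (F : Type) [Field F] [Fintype F] : ∃ l : F, l ≠ 0 ∧ IsG l ∧
    ∀ n : ℕ, l ^ n = 1 → (Fintype.card F - 1) ∣ n := by
  classical
  obtain ⟨g, hg⟩ := IsCyclic.exists_generator (α := Fˣ)
  have hfo : orderOf g = Fintype.card F - 1 := by
    rw [orderOf_eq_card_of_forall_mem_zpowers hg, Nat.card_eq_fintype_card, Fintype.card_units]
  refine ⟨g, g.ne_zero, ?_, ?_⟩
  · intro x hx
    have := hg (Units.mk0 x hx)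
    rw [← mem_powers_iff_mem_zpowers] at this
    obtain ⟨n, hn⟩ := this
    refine ⟨n, ?_⟩
    have := congrArg Units.val hn
    simpa using this.symm
  · intro n h
    have : g ^ n = 1 := by
      ext; simpa using h
    rw [← hfo]
    exact orderOf_dvd_of_pow_eq_one this


theorem gen_sq {F : Type} [Field F] [Fintype F] {l : F} (hl : l ≠ 0) (hg : IsG l) (hl2 : l ^ 2 ≠ 1)
    (a b c : F) (hA : a * (-a) - b * c = 1) (ha : a ≠ 0) (hb : b ≠ 0) (hc : c ≠ 0)
    (h2 : 2 * a ^ 2 + 1 ≠ 0) (hs : IsSquare (1 + a ^ 2)) {M : Subgroup (SL2 F)}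
    (hM : dd l hl ∈ M) (hAM : sl a b c (-a) hA ∈ M) : M = ⊤ := by
  obtain ⟨r, hr⟩ := hs
  have hbc : b * c = - r ^ 2 := by linear_combination -hA - hr
  have hr0 : r ≠ 0 := by
    rintro rfl
    have : b * c ≠ 0 := mul_ne_zero hb hc
    apply this
    rw [hbc]; ring
  have hn := dd_mem hl hg hM (r / a) (div_ne_zero hr0 ha)
  refine gen_a hl hg hl2 hM _ hAM hc _ (M.mul_mem (M.mul_mem hAM hn) hAM) ?_ ?_
  · simp only [dd, mul00, mul01, mul10, mul11, sl00, sl01, sl10, sl11]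
    field_simp
    linear_combination a * hbc
  · simp only [dd, mul00, mul01, mul10, mul11, sl00, sl01, sl10, sl11]
    intro h
    field_simp at h
    have h3 : (a ^ 2 - r ^ 2) * (a ^ 2 + r ^ 2) = 0 := by linear_combination h - r ^ 2 * hbc
    have h4 : a ^ 2 - r ^ 2 = - 1 := by linear_combination hr
    rw [h4] at h3
    apply h2
    linear_combination -h3 + hr

theorem nonsq_div {F : Type} [Field F] [Fintype F] {x y : F} (hx : ¬ IsSquare x) (hy : ¬ IsSquare y) :
    ∃ n : F, y = x * n ^ 2 := by
  have h2 : ringChar F ≠ 2 := fun h => hx (FiniteField.isSquare_of_char_two h x)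
  have hx0 : x ≠ 0 := by rintro rfl; exact hx (IsSquare.zero)
  have hy0 : y ≠ 0 := by rintro rfl; exact hy (IsSquare.zero)
  classical
  have h1 := quadraticChar_neg_one_iff_not_isSquare.2 hx
  have h3 := quadraticChar_neg_one_iff_not_isSquare.2 hy
  have h4 : quadraticChar F (x * y) = 1 := by rw [map_mul, h1, h3]; norm_num
  obtain ⟨r, hr⟩ := (quadraticChar_one_iff_isSquare (mul_ne_zero hx0 hy0)).1 h4
  refine ⟨r / x, ?_⟩
  field_simp
  linear_combination hr

theorem avoid {F : Type} [Field F] [Fintype F] (p : Polynomial F) (hp : p ≠ 0)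
    (h : p.natDegree < Fintype.card F) : ∃ x, p.eval x ≠ 0 := by
  by_contra! h1
  apply hp
  exact Polynomial.eq_zero_of_natDegree_lt_card_of_eval_eq_zero p Function.injective_id
    (fun x => h1 x) h

theorem gen_nonsq {F : Type} [Field F] [Fintype F] {l : F} (hl : l ≠ 0) (hg : IsG l)
    (hl2 : l ^ 2 ≠ 1) (hcard : 12 ≤ Fintype.card F)
    (a b c : F) (hA : a * (-a) - b * c = 1) (ha : a ≠ 0) (hb : b ≠ 0) (hc : c ≠ 0)
    (hs : ¬ IsSquare (1 + a ^ 2)) {M : Subgroup (SL2 F)}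
    (hM : dd l hl ∈ M) (hAM : sl a b c (-a) hA ∈ M) : M = ⊤ := by
  obtain ⟨e, he⟩ : ∃ e, 1 + a ^ 2 = e * a ^ 2 := ⟨(1 + a ^ 2) / a ^ 2, by field_simp⟩
  have hes : ¬ IsSquare e := by
    rintro ⟨r, hr⟩
    exact hs ⟨r * a, by rw [he, hr]; ring⟩
  have hbc : b * c = - (e * a ^ 2) := by linear_combination -hA - he
  have he0 : e ≠ 0 := by rintro rfl; exact hes (IsSquare.zero)
  have he1 : 1 - e ≠ 0 := by
    intro h
    exact hes ⟨1, by linear_combination -h⟩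
  obtain ⟨m, hm⟩ := avoid (Polynomial.X * (Polynomial.X ^ 2 - 1) *
    (Polynomial.X ^ 4 - Polynomial.C (1 + e) * Polynomial.X ^ 2 + 1) *
    (Polynomial.C e * Polynomial.X ^ 4 - Polynomial.C (1 + e) * Polynomial.X ^ 2
      + Polynomial.C e) : Polynomial F)
    (by
      refine mul_ne_zero (mul_ne_zero (mul_ne_zero Polynomial.X_ne_zero ?_) ?_) ?_
      · intro h; have := congrArg (Polynomial.eval 0) h; simp at this
      · intro h; have := congrArg (Polynomial.eval 0) h; simp at this
      · intro h; have := congrArg (Polynomial.eval 0) h; simp [he0] at this)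
    (by
      refine lt_of_le_of_lt ?_ hcard
      compute_degree)
  simp only [Polynomial.eval_mul, Polynomial.eval_X, Polynomial.eval_sub, Polynomial.eval_pow,
    Polynomial.eval_one, Polynomial.eval_add, Polynomial.eval_C, mul_ne_zero_iff] at hm
  obtain ⟨⟨⟨hm0, hm1⟩, hm2⟩, hm3⟩ := hm
  have hme : m ^ 2 - e ≠ 0 := by
    intro h
    exact hes ⟨m, by linear_combination -h⟩
  have hk := M.mul_mem (M.mul_mem hAM (dd_mem hl hg hM m hm0)) hAM
  have hy : ((m ^ 2 - e) / (m ^ 2 - 1)) ≠ 0 := div_ne_zero hme hm1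
  by_cases hys : IsSquare ((m ^ 2 - e) / (m ^ 2 - 1))
  · obtain ⟨n, hn⟩ := hys
    have hn0 : n ≠ 0 := by
      rintro rfl
      apply hy; rw [hn]; ring
    field_simp at hn
    have hh := M.mul_mem (M.mul_mem hAM (M.inv_mem (dd_mem hl hg hM n hn0))) hk
    refine gen_b hl hg hM _ hAM hc _ hh ?_ ?_
    · simp only [dd, mul00, mul01, mul10, mul11, inv00, inv01, inv10, inv11, sl00, sl01, sl10, sl11]
      field_simp
      linear_combination c * hbc + c * a ^ 2 * hn
    · simp only [dd, mul00, mul01, mul10, mul11, inv00, inv01, inv10, inv11, sl00, sl01, sl10, sl11]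
      intro h
      field_simp at h
      have h5 : a ^ 2 * b * ((m ^ 2 - 1) + n ^ 2 * (1 - e * m ^ 2)) = 0 := by
        linear_combination h - n ^ 2 * b * m ^ 2 * hbc
      have h6 := (mul_eq_zero.1 h5).resolve_left (by positivity)
      have h7 : (1 - e) * (m ^ 4 - (1 + e) * m ^ 2 + 1) = 0 := by
        linear_combination (m ^ 2 - 1) * h6 + (1 - e * m ^ 2) * hn
      exact (mul_ne_zero he1 hm2) h7
  · obtain ⟨n, hn⟩ := nonsq_div hes hys
    have hn0 : n ≠ 0 := by
      rintro rfl
      apply hy; rw [hn]; ring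
    field_simp at hn
    have hh := M.mul_mem (M.mul_mem hAM (M.inv_mem (dd_mem hl hg hM n hn0))) hk
    refine gen_a hl hg hl2 hM _ hAM hc _ hh ?_ ?_
    · simp only [dd, mul00, mul01, mul10, mul11, inv00, inv01, inv10, inv11, sl00, sl01, sl10, sl11]
      field_simp
      linear_combination a * hbc + n ^ 2 * a * (m ^ 2 - 1) * hbc + a ^ 3 * hn
    · simp only [dd, mul00, mul01, mul10, mul11, inv00, inv01, inv10, inv11, sl00, sl01, sl10, sl11]
      intro h
      field_simp at h
      have h5 : a ^ 3 * (e * (m ^ 2 - 1) + n ^ 2 * (1 - e * m ^ 2)) = 0 := by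
        linear_combination -h + (a * (m ^ 2 - 1) - n ^ 2 * a * m ^ 2) * hbc
      have h6 := (mul_eq_zero.1 h5).resolve_left (by positivity)
      have h7 : (1 - e) * (e * m ^ 4 - (1 + e) * m ^ 2 + e) = 0 := by
        linear_combination -e * (m ^ 2 - 1) * h6 - (1 - e * m ^ 2) * hn
      exact (mul_ne_zero he1 hm3) h7

theorem gen_DA {F : Type} [Field F] [Fintype F] {l : F} (hl : l ≠ 0) (hg : IsG l)
    (hl2 : l ^ 2 ≠ 1) (hcard : ringChar F = 2 ∨ 12 ≤ Fintype.card F)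
    (a b c : F) (hA : a * (-a) - b * c = 1) (ha : a ≠ 0) (hb : b ≠ 0) (hc : c ≠ 0)
    (h2 : 2 * a ^ 2 + 1 ≠ 0) {M : Subgroup (SL2 F)}
    (hM : dd l hl ∈ M) (hAM : sl a b c (-a) hA ∈ M) : M = ⊤ := by
  by_cases hs : IsSquare (1 + a ^ 2)
  · exact gen_sq hl hg hl2 a b c hA ha hb hc h2 hs hM hAM
  · rcases hcard with h | h
    · exact absurd (FiniteField.isSquare_of_char_two h _) hs
    · exact gen_nonsq hl hg hl2 h a b c hA ha hb hc hs hM hAM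

theorem psl_gen {F : Type} [Field F] (X Y : SL2 F)
    (h : Subgroup.closure {X, Y} = ⊤) :
    Subgroup.closure {(QuotientGroup.mk X : PSL2 F), QuotientGroup.mk Y} = ⊤ := by
  have h1 := congrArg (Subgroup.map (QuotientGroup.mk' (Subgroup.center (SL2 F)))) h
  rw [MonoidHom.map_closure, Set.image_pair, Subgroup.map_top_of_surjective _
    (QuotientGroup.mk'_surjective _)] at h1
  exact h1

theorem part1 {F : Type} [Field F] (A B : SL2 F) (hA : trc A = 0) (hB : trc B = 1 ∨ trc B = -1)
    (h : Subgroup.closure {A, B} = ⊤) :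
    ∃ φ : Monoid.Coprod (Cyc 2) (Cyc 3) →* PSL2 F, Function.Surjective φ := by
  have hA2 : (QuotientGroup.mk A : PSL2 F) ^ 2 = 1 := by
    rw [← QuotientGroup.mk_pow, sq_of_trc hA, psl_neg]; rfl
  have hB2 : (QuotientGroup.mk B : PSL2 F) ^ 3 = 1 := by
    rcases hB with hB | hB
    · rw [← QuotientGroup.mk_pow, cube_of_trc hB, psl_neg]; rfl
    · have : trc (-B) = 1 := by
        simp only [trc, neg_app] at hB ⊢
        linear_combination -hB
      rw [← psl_neg, ← QuotientGroup.mk_pow, cube_of_trc this, psl_neg]; rfl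
  obtain ⟨φ, h1, h2⟩ := exists_hom _ _ hA2 hB2
  refine ⟨φ, ?_⟩
  rw [← MonoidHom.range_eq_top, eq_top_iff, ← psl_gen A B h, Subgroup.closure_le]
  rintro x (rfl | rfl)
  · exact ⟨_, h1⟩
  · exact ⟨_, h2⟩

theorem pair_eq_top {G : Type} [Group G] {X Y : G} (h : ∀ M : Subgroup G, X ∈ M → Y ∈ M → M = ⊤) :
    Subgroup.closure {X, Y} = ⊤ :=
  h _ (Subgroup.subset_closure (by simp)) (Subgroup.subset_closure (by simp))

/-- conclusion -/
def Concl (F : Type) [Field F] : Prop :=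
    (∃ φ : Monoid.Coprod (Cyc 2) (Cyc 3) →* PSL2 F, Function.Surjective φ) ∧
    ∃ h1 h2 : PSL2 F, Subgroup.closure {h1, h2} = ⊤ ∧
      ∀ (θ : Monoid.Coprod (Cyc 2) (Cyc 3) →* PSL2 F)
        (g1 g2 : Monoid.Coprod (Cyc 2) (Cyc 3)),
        Subgroup.closure {g1, g2} = ⊤ → (θ g1, θ g2) ≠ (h1, h2)

theorem kap_dd {F : Type} [Field F] (l : F) (hl : l ≠ 0) (a b c d : F) (h : a * d - b * c = 1) :
    kap (dd l hl) (sl a b c d h) = 2 - b * c * (l - l⁻¹) ^ 2 := by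
  simp only [kap, trc, dd, mul00, mul01, mul10, mul11, inv00, inv01, inv10, inv11,
    sl00, sl01, sl10, sl11]
  field_simp
  linear_combination (2 * l ^ 2) * h

theorem p1_big {F : Type} [Field F] [Fintype F] {l : F} (hl : l ≠ 0) (hg : IsG l)
    (hl2 : l ^ 2 ≠ 1) (hcard : ringChar F = 2 ∨ 12 ≤ Fintype.card F) (h8 : l ^ 8 ≠ 1)
    (h12 : l ^ 12 ≠ 1) :
    ∃ φ : Monoid.Coprod (Cyc 2) (Cyc 3) →* PSL2 F, Function.Surjective φ := by
  have hw : 1 - l ^ 2 ≠ 0 := fun h => hl2 (by linear_combination -h)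
  set a := l / (1 - l ^ 2) with ha
  have ha0 : a ≠ 0 := div_ne_zero hl hw
  have hA : a * (-a) - (-1 - a ^ 2) * 1 = 1 := by ring
  refine part1 (sl a (-1 - a ^ 2) 1 (-a) hA) ((sl a (-1 - a ^ 2) 1 (-a) hA)⁻¹ * dd l hl) ?_
    (Or.inl ?_) (pair_eq_top fun M h1 h2 => ?_)
  · simp [trc, sl00, sl11]
  · simp only [trc, mul00, mul01, mul10, mul11, inv00, inv01, inv10, inv11, dd,
      sl00, sl01, sl10, sl11]
    rw [ha]
    field_simp
    ring
  · have h3 : dd l hl ∈ M := by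
      have := M.mul_mem h1 h2
      simpa using this
    refine gen_DA hl hg hl2 hcard a (-1 - a ^ 2) 1 hA ha0 ?_ one_ne_zero ?_ h3 h1
    · rw [ha]
      intro h
      field_simp at h
      apply h12
      linear_combination -(l ^ 2 + 1) * (l ^ 6 - 1) * h
    · rw [ha]
      intro h
      field_simp at h
      apply h8
      linear_combination (l ^ 4 - 1) * h


theorem int_char2 {F : Type} [Field F] (h2 : (2 : F) = 0) {x : F} (h0 : x ≠ 0) (h1 : x ≠ 1) (n : ℤ) :
    x ≠ n := by
  rintro rfl
  rcases Int.even_or_odd n with ⟨k, rfl⟩ | ⟨k, rfl⟩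
  · apply h0
    push_cast
    linear_combination (k : F) * h2
  · apply h1
    push_cast
    linear_combination (k : F) * h2

theorem even_big {F : Type} [Field F] [Fintype F] (h2 : ringChar F = 2) (hq : 8 ≤ Fintype.card F)
    (h9 : Fintype.card F ≤ 8 ∨ 16 ≤ Fintype.card F) : Concl F := by
  obtain ⟨l, hl, hg, ho⟩ := exists_isG F
  have hno : ∀ n, ¬ (Fintype.card F - 1) ∣ n → l ^ n ≠ 1 := fun n h h' => h (ho n h')
  have n2 : l ^ 2 ≠ 1 := hno 2 (fun h => by have := Nat.le_of_dvd (by norm_num) h; omega)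
  have n3 : l ^ 3 ≠ 1 := hno 3 (fun h => by have := Nat.le_of_dvd (by norm_num) h; omega)
  have n8 : l ^ 8 ≠ 1 := by
    apply hno 8
    intro h
    rcases h9 with h9 | h9
    · have : Fintype.card F = 8 := by omega
      rw [this] at h; revert h; decide
    · have := Nat.le_of_dvd (by norm_num) h; omega
  have n12 : l ^ 12 ≠ 1 := by
    apply hno 12
    intro h
    rcases h9 with h9 | h9
    · have : Fintype.card F = 8 := by omega
      rw [this] at h; revert h; decide
    · have := Nat.le_of_dvd (by norm_num) h; omega
  have t0 : (2 : F) = 0 := by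
    have := ringChar.Nat.cast_ringChar (R := F)
    rw [h2] at this
    exact_mod_cast this
  refine ⟨p1_big hl hg n2 (Or.inl h2) n8 n12, ?_⟩
  have hw : l ^ 2 - 1 ≠ 0 := fun h => n2 (by linear_combination h)
  have hw1 : l ^ 2 + l + 1 ≠ 0 := fun h => n3 (by linear_combination (l - 1) * h)
  set a := 1 + l / (l ^ 2 - 1) with ha
  have ha0 : a ≠ 0 := by
    intro h
    rw [ha] at h
    field_simp at h
    apply hw1
    linear_combination h + t0
  have haw : (1 + a ^ 2) * (l - l⁻¹) ^ 2 = 1 := by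
    rw [ha]
    field_simp
    linear_combination (l ^ 4 - 2 * l ^ 2 + 1 + l * (l ^ 2 - 1)) * t0
  have hA : a * (-a) - (-1 - a ^ 2) * 1 = 1 := by ring
  have hb : -1 - a ^ 2 ≠ 0 := by
    intro h
    have : (1 + a ^ 2) = 0 := by linear_combination -h
    rw [this] at haw
    simp at haw
  have hk : kap (dd l hl) (sl a (-1 - a ^ 2) 1 (-a) hA) = 1 := by
    rw [kap_dd]
    linear_combination haw + t0
  refine ⟨QuotientGroup.mk (dd l hl), QuotientGroup.mk (sl a (-1 - a ^ 2) 1 (-a) hA),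
    psl_gen _ _ (pair_eq_top fun M h1 h3 => ?_), ?_⟩
  · refine gen_DA hl hg n2 (Or.inl h2) a (-1 - a ^ 2) 1 hA ha0 hb one_ne_zero ?_ h1 h3
    rw [t0]; simp
  · apply obs_even
    · rw [hk, t0]; exact one_ne_zero
    · rw [hk]; linear_combination t0
    · left
      apply int_char2 t0
      · simp only [trc, dd, sl00, sl11]
        intro h
        field_simp at h
        apply hw
        linear_combination h - t0
      · simp only [trc, dd, sl00, sl11]
        intro h
        field_simp at h
        apply hw1
        linear_combination h + l * t0

theorem four {F : Type} [Field F] [Fintype F] (h2 : ringChar F = 2) (hq : Fintype.card F = 4) :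
    Concl F := by
  obtain ⟨l, hl, hg, ho⟩ := exists_isG F
  have hno : ∀ n, ¬ (Fintype.card F - 1) ∣ n → l ^ n ≠ 1 := fun n h h' => h (ho n h')
  rw [hq] at hno
  have n2 : l ^ 2 ≠ 1 := hno 2 (by decide)
  have n1 : l ≠ 1 := by have := hno 1 (by decide); simpa using this
  have t0 : (2 : F) = 0 := by
    have := ringChar.Nat.cast_ringChar (R := F)
    rw [h2] at this
    exact_mod_cast this
  have n3 : l ^ 3 = 1 := by
    have := FiniteField.pow_card_sub_one_eq_one l hl
    rwa [hq] at this
  have hw1 : l ^ 2 + l + 1 = 0 := by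
    have : (l - 1) * (l ^ 2 + l + 1) = 0 := by linear_combination n3
    exact (mul_eq_zero.1 this).resolve_left (sub_ne_zero.2 n1)
  have hi : l⁻¹ = l ^ 2 := by
    field_simp
    linear_combination -n3
  have hA : l * (-l) - (-1 - l ^ 2) * 1 = 1 := by ring
  constructor
  · refine part1 (sl l (-1 - l ^ 2) 1 (-l) hA) (dd l hl) ?_ (Or.inr ?_)
      (pair_eq_top fun M h1 h3 => ?_)
    · simp [trc, sl00, sl11]
    · simp only [trc, dd, sl00, sl11]
      rw [hi]
      linear_combination hw1
    · refine gen_DA hl hg n2 (Or.inl h2) l (-1 - l ^ 2) 1 hA hl ?_ one_ne_zero ?_ h3 h1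
      · intro h
        apply hl
        linear_combination h + hw1
      · rw [t0]; simp
  · have hB : 0 * l - 1 * 1 = (1 : F) := by linear_combination -t0
    have hk : kap (dd l hl) (sl 0 1 1 l hB) = 1 := by
      have h5 : l - l ^ 2 = 1 := by linear_combination -hw1 + l * t0
      rw [kap_dd, hi, h5]
      ring
    refine ⟨QuotientGroup.mk (dd l hl), QuotientGroup.mk (sl 0 1 1 l hB),
      psl_gen _ _ (pair_eq_top fun M h1 h3 => ?_), ?_⟩
    · exact gen_a hl hg n2 h1 _ h3 one_ne_zero _ h3 rfl hl
    · apply obs_even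
      · rw [hk, t0]; exact one_ne_zero
      · rw [hk]; linear_combination t0
      · right
        apply int_char2 t0
        · simp [trc, sl00, sl11, hl]
        · simp [trc, sl00, sl11, n1]

theorem exists_y {F : Type} [Field F] [Fintype F] (h2 : (2 : F) ≠ 0) (hq : 14 ≤ Fintype.card F)
    (k w : F) (hk : k ≠ 0) (hw : w ≠ 0) :
    ∃ y : F, y ≠ 0 ∧ y ^ 2 + w ^ 2 ≠ 0 ∧ 2 * y ^ 2 + w ^ 2 ≠ 0 ∧ ¬ IsSquare (k + y ^ 2) := by
  classical
  by_contra! hcon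
  set P : Polynomial F := Polynomial.X * (Polynomial.X ^ 2 + Polynomial.C k) *
    (Polynomial.X ^ 2 + Polynomial.C (w ^ 2)) *
    (Polynomial.C 2 * Polynomial.X ^ 2 + Polynomial.C (w ^ 2)) with hP
  have hP0 : P ≠ 0 := by
    refine mul_ne_zero (mul_ne_zero (mul_ne_zero Polynomial.X_ne_zero ?_) ?_) ?_
    · intro h; have := congrArg (Polynomial.eval 0) h; simp [hk] at this
    · intro h; have := congrArg (Polynomial.eval 0) h; simp [hw] at this
    · intro h; have := congrArg (Polynomial.eval 0) h; simp [hw] at this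
  have hPd : P.natDegree ≤ 7 := by
    rw [hP]
    compute_degree
  have hR : P.roots.toFinset.card ≤ 7 :=
    (Multiset.toFinset_card_le _).trans ((Polynomial.card_roots' P).trans hPd)
  set S : Finset F := Finset.univ \ P.roots.toFinset with hS
  have hSc : Fintype.card F ≤ S.card + 7 := by
    have := Finset.card_sdiff_add_card (s := (Finset.univ : Finset F)) (t := P.roots.toFinset)
    have h3 : Finset.univ.card ≤ (Finset.univ ∪ P.roots.toFinset).card :=
      Finset.card_le_card Finset.subset_union_left
    rw [Finset.card_univ] at h3
    rw [hS]
    omega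
  have hz : ∀ y : S, ∃ z : F, k + (y : F) ^ 2 = z * z ∧ z ≠ 0 := by
    rintro ⟨y, hy⟩
    have hy : P.eval y ≠ 0 := by
      simpa [hS, hP0] using hy
    rw [hP] at hy
    simp only [Polynomial.eval_mul, Polynomial.eval_X, Polynomial.eval_pow,
      Polynomial.eval_add, Polynomial.eval_C, mul_ne_zero_iff] at hy
    obtain ⟨⟨⟨a1, a2⟩, a3⟩, a4⟩ := hy
    obtain ⟨z, hz⟩ := hcon y a1 a3 a4
    refine ⟨z, hz, ?_⟩
    rintro rfl
    apply a2
    linear_combination hz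
  choose z hz hz0 using hz
  have hinj : Fintype.card (S × Bool) ≤ Fintype.card Fˣ := by
    have hne : ∀ p : S × Bool, (p.1 : F) + (if p.2 then z p.1 else - z p.1) ≠ 0 := by
      rintro ⟨y, b⟩ h
      apply hk
      have h1 := hz y
      cases b
      · simp at h
        linear_combination h1 - (y + z y) * h
      · simp at h
        linear_combination h1 - (y - z y) * h
    refine Fintype.card_le_of_injective (fun p => Units.mk0 _ (hne p)) ?_
    rintro p p' h
    have h : (p.1 : F) + (if p.2 then z p.1 else - z p.1) =
        (p'.1 : F) + (if p'.2 then z p'.1 else - z p'.1) := by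
      simpa using h
    have e : ∀ p : S × Bool, ((p.1 : F) + (if p.2 then z p.1 else - z p.1)) *
        ((p.1 : F) - (if p.2 then z p.1 else - z p.1)) = -k := by
      rintro ⟨y, b⟩
      have h1 := hz y
      cases b <;> simp <;> linear_combination h1
    have e3 : (p.1 : F) - (if p.2 then z p.1 else - z p.1) =
        (p'.1 : F) - (if p'.2 then z p'.1 else - z p'.1) := by
      apply mul_left_cancel₀ (hne p)
      rw [e p]
      conv_rhs => rw [h]
      rw [e p']
    have e4 : (p.1 : F) = p'.1 := by
      apply mul_left_cancel₀ h2
      linear_combination h + e3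
    obtain ⟨y, b⟩ := p
    obtain ⟨y', b'⟩ := p'
    have e5 : y = y' := Subtype.ext e4
    subst e5
    have e6 : z y ≠ - z y := by
      intro h
      apply hz0 y
      apply mul_left_cancel₀ h2
      linear_combination h
    cases b <;> cases b' <;> simp at h <;> simp
    · exact e6 h.symm
    · exact e6 h
  rw [Fintype.card_prod, Fintype.card_bool, Fintype.card_units, Fintype.card_coe] at hinj
  omega

theorem odd_big {F : Type} [Field F] [Fintype F] (h2 : ringChar F ≠ 2) (hq : 17 ≤ Fintype.card F) :
    Concl F := by
  obtain ⟨l, hl, hg, ho⟩ := exists_isG F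
  have hno : ∀ n, ¬ (Fintype.card F - 1) ∣ n → l ^ n ≠ 1 := fun n h h' => h (ho n h')
  have n2 : l ^ 2 ≠ 1 := hno 2 (fun h => by have := Nat.le_of_dvd (by norm_num) h; omega)
  have n6 : l ^ 6 ≠ 1 := hno 6 (fun h => by have := Nat.le_of_dvd (by norm_num) h; omega)
  have n8 : l ^ 8 ≠ 1 := hno 8 (fun h => by have := Nat.le_of_dvd (by norm_num) h; omega)
  have n12 : l ^ 12 ≠ 1 := hno 12 (fun h => by have := Nat.le_of_dvd (by norm_num) h; omega)
  refine ⟨p1_big hl hg n2 (Or.inr (by omega)) n8 n12, ?_⟩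
  have t0 : (2 : F) ≠ 0 := Ring.two_ne_zero h2
  set w := l - l⁻¹ with hw
  have hw0 : w ≠ 0 := by
    intro h
    rw [hw] at h
    field_simp at h
    exact n2 (by linear_combination h)
  have hk0 : 3 + w ^ 2 ≠ 0 := by
    intro h
    rw [hw] at h
    field_simp at h
    apply n6
    linear_combination (l ^ 2 - 1) * h
  obtain ⟨y, y0, y1, y2, y3⟩ := exists_y t0 (by omega) (3 + w ^ 2) w hk0 hw0
  obtain ⟨a, ha⟩ : ∃ a, y = a * w := ⟨y / w, by field_simp⟩
  subst ha
  have ha0 : a ≠ 0 := by rintro rfl; simp at y0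
  have hA : a * (-a) - (-1 - a ^ 2) * 1 = 1 := by ring
  have hb : -1 - a ^ 2 ≠ 0 := by
    intro h
    apply y1
    linear_combination - w ^ 2 * h
  refine ⟨QuotientGroup.mk (dd l hl), QuotientGroup.mk (sl a (-1 - a ^ 2) 1 (-a) hA),
    psl_gen _ _ (pair_eq_top fun M h1 h3 => ?_), ?_⟩
  · refine gen_DA hl hg n2 (Or.inr (by omega)) a (-1 - a ^ 2) 1 hA ha0 hb one_ne_zero ?_ h1 h3
    intro h
    apply y2
    linear_combination w ^ 2 * h
  · apply obs_odd
    · rw [kap_dd, ← hw]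
      intro h
      have : (-1 - a ^ 2) * w ^ 2 = 0 := by linear_combination -h
      exact (mul_ne_zero hb (pow_ne_zero 2 hw0)) this
    · rw [kap_dd, ← hw]
      convert y3 using 2
      ring

theorem uu_pow {F : Type} [Field F] (n : ℕ) : (uu (1 : F)) ^ n = uu (n : F) := by
  induction n with
  | zero => simp [uu_zero]
  | succ n ih => rw [pow_succ, ih, uu_mul]; push_cast; rfl

theorem small {F : Type} [Field F] [Fintype F] (p : ℕ) [Fact p.Prime] (hq : Fintype.card F = p)
    (g : ℕ) (hg : (g : ZMod p) ≠ 0) (hs : ¬ IsSquare ((3 + g ^ 2 : ℕ) : ZMod p)) : Concl F := by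
  let e : ZMod p ≃+* F := ZMod.ringEquivOfPrime F Fact.out hq
  have hU : ∀ M : Subgroup (SL2 F), uu 1 ∈ M → ∀ x, uu x ∈ M := by
    intro M hM x
    have : x = ((e.symm x).val : F) := by
      have h1 : e.symm x = ((e.symm x).val : ZMod p) := by simp
      have h3 := congrArg e h1
      rwa [map_natCast, RingEquiv.apply_symm_apply] at h3
    rw [this, ← uu_pow]
    exact M.pow_mem hM _
  have hg' : (g : F) ≠ 0 := by
    intro h
    apply hg
    have := congrArg e.symm h
    simpa using this
  have hs' : ¬ IsSquare ((3 + g ^ 2 : ℕ) : F) := by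
    intro h
    apply hs
    have := h.map e.symm
    rwa [map_natCast] at this
  constructor
  · refine part1 (ww 1 one_ne_zero) ((ww 1 one_ne_zero)⁻¹ * uu 1) ?_ (Or.inr ?_)
      (pair_eq_top fun M h1 h3 => ?_)
    · simp [trc, ww, sl00, sl11]
    · simp [trc, ww, uu, mul00, mul01, mul10, mul11, inv00, inv01, inv10, inv11,
        sl00, sl01, sl10, sl11]
    · have h4 : uu 1 ∈ M := by
        have := M.mul_mem h1 h3
        simpa using this
      exact gen_upper M (hU M h4) _ h1 one_ne_zero
  · have hk : kap (uu 1) (ww (g : F) hg') = 2 + g ^ 2 := by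
      simp only [kap, trc, ww, uu, mul00, mul01, mul10, mul11, inv00, inv01, inv10, inv11,
        sl00, sl01, sl10, sl11]
      field_simp
      ring
    refine ⟨QuotientGroup.mk (uu 1), QuotientGroup.mk (ww (g : F) hg'),
      psl_gen _ _ (pair_eq_top fun M h1 h3 => ?_), ?_⟩
    · exact gen_upper M (hU M h1) _ h3 hg'
    · apply obs_odd
      · rw [hk]
        intro h
        apply pow_ne_zero 2 hg'
        linear_combination h
      · rw [hk]
        convert hs' using 2
        push_cast
        ring

theorem main_concl (F : Type) [Field F] [Fintype F] (hq4 : 4 ≤ Fintype.card F)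
    (hq9 : Fintype.card F ≠ 9) : Concl F := by
  have hpp := FiniteField.isPrimePow_card F
  by_cases h2 : ringChar F = 2
  · obtain ⟨n, hp, hn⟩ := FiniteField.card F (ringChar F)
    rw [h2] at hn
    obtain ⟨n, hn0⟩ := n
    simp only [PNat.mk_coe] at hn
    match n, hn with
    | 0, hn => omega
    | 1, hn => omega
    | 2, hn => exact four h2 (by omega)
    | 3, hn => exact even_big h2 (by omega) (by omega)
    | n + 4, hn =>
      have : 0 < 2 ^ n := by positivity
      have h3 : 2 ^ (n + 4) = 16 * 2 ^ n := by ring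
      exact even_big h2 (by omega) (by omega)
  · by_cases h17 : 17 ≤ Fintype.card F
    · exact odd_big h2 h17
    · have hodd := FiniteField.odd_card_of_char_ne_two h2
      have h15 : Fintype.card F ≠ 15 := by
        intro h
        rw [h] at hpp
        obtain ⟨p, k, hp, _, hpk⟩ := hpp
        have hp := hp.nat_prime
        have h3 : 3 ∣ p := Nat.Prime.dvd_of_dvd_pow Nat.prime_three (n := k) (by rw [hpk]; norm_num)
        have h5 : 5 ∣ p := Nat.Prime.dvd_of_dvd_pow Nat.prime_five (n := k) (by rw [hpk]; norm_num)
        have e3 := (Nat.prime_dvd_prime_iff_eq Nat.prime_three hp).1 h3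
        have e5 := (Nat.prime_dvd_prime_iff_eq Nat.prime_five hp).1 h5
        omega
      have : Fintype.card F = 5 ∨ Fintype.card F = 7 ∨ Fintype.card F = 11 ∨
          Fintype.card F = 13 := by
        omega
      rcases this with h | h | h | h
      · have d1 : ((2 : ℕ) : ZMod 5) ≠ 0 := by decide
        have d2 : ¬ IsSquare ((3 + 2 ^ 2 : ℕ) : ZMod 5) := by decide
        have : Fact (Nat.Prime 5) := ⟨by norm_num⟩
        exact small 5 h 2 d1 d2
      · have d1 : ((3 : ℕ) : ZMod 7) ≠ 0 := by decide
        have d2 : ¬ IsSquare ((3 + 3 ^ 2 : ℕ) : ZMod 7) := by decide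
        have : Fact (Nat.Prime 7) := ⟨by norm_num⟩
        exact small 7 h 3 d1 d2
      · have d1 : ((5 : ℕ) : ZMod 11) ≠ 0 := by decide
        have d2 : ¬ IsSquare ((3 + 5 ^ 2 : ℕ) : ZMod 11) := by decide
        have : Fact (Nat.Prime 11) := ⟨by norm_num⟩
        exact small 11 h 5 d1 d2
      · have d1 : ((4 : ℕ) : ZMod 13) ≠ 0 := by decide
        have d2 : ¬ IsSquare ((3 + 4 ^ 2 : ℕ) : ZMod 13) := by decide
        have : Fact (Nat.Prime 13) := ⟨by norm_num⟩
        exact small 13 h 4 d1 d2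


/-- for `G = C_2 ∗ C_3` and `H = PSL(2,q)` with `q ≥ 4`, `q ≠ 9`,
the group `H` is a homomorphic image of `G`, and some generating pair of `H`
does not lift to a generating pair of `G` along any homomorphism `G → H`. -/
theorem stmt0 (q : ℕ) (F : Type) [Field F] [Fintype F] (hcard : Fintype.card F = q)
    (hq4 : 4 ≤ q) (hq9 : q ≠ 9) :
    (∃ φ : Monoid.Coprod (Cyc 2) (Cyc 3) →* PSL2 F, Function.Surjective φ) ∧
    ∃ h1 h2 : PSL2 F, Subgroup.closure {h1, h2} = ⊤ ∧
      ∀ (θ : Monoid.Coprod (Cyc 2) (Cyc 3) →* PSL2 F)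
        (g1 g2 : Monoid.Coprod (Cyc 2) (Cyc 3)),
        Subgroup.closure {g1, g2} = ⊤ → (θ g1, θ g2) ≠ (h1, h2) := by
  subst hcard
  exact main_concl F hq4 hq9
end

section
/- Let p ≥ 3 be a prime and q = p^k a power of p with q ≥ 7 and q ≠ 9. Set G = C_2 ∗ C_p and H = PSL(2,q). Then H is a homomorphic image of G (there is a surjective group homomorphism G → H), and there exists a generating pair (h1,h2) of H such that for every group homomorphism θ : G → H and every generating pair (g1,g2) of G one has (θ(g1), θ(g2)) ≠ (h1,h2). -/
namespace Pf
open Matrix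

section gen
variable {F : Type} [Field F]

def mk4 (a b c d : F) (h : a * d - b * c = 1) : SL2 F := ⟨!![a, b; c, d], by rw [det_fin_two_of, h]⟩

theorem coe_mk4 {a b c d : F} (h) : ((mk4 a b c d h : SL2 F) : Matrix (Fin 2) (Fin 2) F) = !![a, b; c, d] := rfl

theorem mk4_mul {a b c d a' b' c' d' : F} (h h') (h'') :
    mk4 a b c d h * mk4 a' b' c' d' h' =
      mk4 (a * a' + b * c') (a * b' + b * d') (c * a' + d * c') (c * b' + d * d') h'' := by
  apply Subtype.ext
  rw [Matrix.SpecialLinearGroup.coe_mul, coe_mk4, coe_mk4, coe_mk4, Matrix.mul_fin_two]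

theorem mk4_inv {a b c d : F} (h) (h') : (mk4 a b c d h)⁻¹ = mk4 d (-b) (-c) a h' := by
  apply Subtype.ext
  rw [Matrix.SpecialLinearGroup.coe_inv, coe_mk4, coe_mk4, Matrix.adjugate_fin_two_of]

theorem mk4_congr {a b c d a' b' c' d' : F} (h h') (h1 : a = a') (h2 : b = b') (h3 : c = c')
    (h4 : d = d') : mk4 a b c d h = mk4 a' b' c' d' h' := by
  subst h1 h2 h3 h4; rfl

theorem exists_mk4 (M : SL2 F) : ∃ a b c d h, M = mk4 a b c d h := by
  refine ⟨M 0 0, M 0 1, M 1 0, M 1 1, ?_, ?_⟩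
  · have := M.det_coe; rw [det_fin_two] at this; exact this
  · apply Subtype.ext; simp only [mk4]; exact Matrix.eta_fin_two _

def U (x : F) : SL2 F := mk4 1 x 0 1 (by ring)
def L (x : F) : SL2 F := mk4 1 0 x 1 (by ring)
def D (x : F) (h : x ≠ 0) : SL2 F := mk4 x 0 0 x⁻¹ (by field_simp; simp)

theorem U_mul (x y : F) : U x * U y = U (x + y) := by
  unfold U; rw [mk4_mul _ _ (by ring)]; apply mk4_congr <;> ring
theorem L_mul (x y : F) : L x * L y = L (x + y) := by
  unfold L; rw [mk4_mul _ _ (by ring)]; apply mk4_congr <;> ring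
theorem U_inv (x : F) : (U x)⁻¹ = U (-x) := by
  unfold U; rw [mk4_inv _ (by ring)]; apply mk4_congr <;> ring
theorem L_inv (x : F) : (L x)⁻¹ = L (-x) := by
  unfold L; rw [mk4_inv _ (by ring)]; apply mk4_congr <;> ring
theorem U_pow (x : F) (n : ℕ) : U x ^ n = U (n * x) := by
  induction n with
  | zero => simp; apply Subtype.ext; simp [U, mk4, Matrix.one_fin_two]
  | succ n ih => rw [pow_succ, ih, U_mul]; congr 1; push_cast; ring
theorem L_pow (x : F) (n : ℕ) : L x ^ n = L (n * x) := by
  induction n with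
  | zero => simp; apply Subtype.ext; simp [L, mk4, Matrix.one_fin_two]
  | succ n ih => rw [pow_succ, ih, L_mul]; congr 1; push_cast; ring
theorem D_mul (x y : F) (hx hy) : D x hx * D y hy = D (x * y) (mul_ne_zero hx hy) := by
  unfold D; rw [mk4_mul _ _ (by field_simp; simp)]; apply mk4_congr <;> simp [mul_comm]
theorem D_pow (x : F) (hx) (n : ℕ) : D x hx ^ n = D (x ^ n) (pow_ne_zero _ hx) := by
  induction n with
  | zero => simp; apply Subtype.ext; simp [D, mk4, Matrix.one_fin_two]
  | succ n ih => rw [pow_succ, ih, D_mul]; congr 1; rw [pow_succ]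
theorem D_inv (x : F) (hx) : (D x hx)⁻¹ = D x⁻¹ (inv_ne_zero hx) := by
  unfold D; rw [mk4_inv _ (by field_simp; simp)]; apply mk4_congr <;> simp

theorem neg_mk4 {a b c d : F} (h) (h') : - mk4 a b c d h = mk4 (-a) (-b) (-c) (-d) h' := by
  apply Subtype.ext; rw [Matrix.SpecialLinearGroup.coe_neg, coe_mk4, coe_mk4]; simp

theorem top_of_UL (K : Subgroup (SL2 F)) (hU : ∀ x, U x ∈ K) (hL : ∀ x, L x ∈ K) : K = ⊤ := by
  have key : ∀ a b c d h, c ≠ 0 → mk4 a b c d h ∈ K := by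
    intro a b c d h hc
    have : mk4 a b c d h = U ((a - 1) / c) * L c * U ((d - 1) / c) := by
      unfold U L
      rw [mk4_mul _ _ (by field_simp; ring), mk4_mul _ _ (by field_simp; ring)]
      apply mk4_congr <;> field_simp
      · ring
      · linear_combination -h
      · ring
      · ring
    rw [this]
    exact K.mul_mem (K.mul_mem (hU _) (hL _)) (hU _)
  rw [eq_top_iff]
  intro M _
  obtain ⟨a, b, c, d, h, rfl⟩ := exists_mk4 M
  by_cases hc : c = 0
  · have ha : a ≠ 0 := by rintro rfl; simp [hc] at h
    have h2 : L 1 * mk4 a b c d h ∈ K := by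
      unfold L
      rw [mk4_mul _ _ (by linear_combination h)]
      apply key
      simpa [hc] using ha
    exact (K.mul_mem_cancel_left (hL 1)).1 h2
  · exact key _ _ _ _ _ hc

theorem top_of_torus (h2 : (2 : F) ≠ 0) (K : Subgroup (SL2 F)) (hD : ∀ t ht, D t ht ∈ K)
    (x : F) (hx : x ≠ 0) (hU : U x ∈ K) (a b c d : F) (h) (hc : c ≠ 0) (hg : mk4 a b c d h ∈ K) :
    K = ⊤ := by
  have sqU : ∀ x, U x ∈ K → ∀ t, U (x * t ^ 2) ∈ K := by
    intro x hx t
    by_cases ht : t = 0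
    · subst ht
      have := K.mul_mem hx (K.inv_mem hx)
      rw [U_inv, U_mul] at this
      convert this using 2; ring
    have := K.mul_mem (K.mul_mem (hD t ht) hx) (hD t⁻¹ (inv_ne_zero ht))
    convert this using 1
    unfold U D
    rw [mk4_mul _ _ (by field_simp; ring), mk4_mul _ _ (by field_simp; ring)]
    apply mk4_congr <;> field_simp <;> ring
  have sqL : ∀ x, L x ∈ K → ∀ t, L (x * t ^ 2) ∈ K := by
    intro x hx t
    by_cases ht : t = 0
    · subst ht
      have := K.mul_mem hx (K.inv_mem hx)
      rw [L_inv, L_mul] at this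
      convert this using 2; ring
    have := K.mul_mem (K.mul_mem (hD t⁻¹ (inv_ne_zero ht)) hx) (hD t ht)
    convert this using 1
    unfold L D
    rw [mk4_mul _ _ (by field_simp; ring), mk4_mul _ _ (by field_simp; ring)]
    apply mk4_congr <;> field_simp <;> ring
  have allU : ∀ y, U y ∈ K := by
    intro y
    have := K.mul_mem (sqU x hU ((y / x + 1) / 2)) (K.inv_mem (sqU x hU ((y / x - 1) / 2)))
    rw [U_inv, U_mul] at this
    convert this using 2
    field_simp
    ring
  have hL : L c ∈ K := by
    have := K.mul_mem (K.mul_mem (K.inv_mem (allU ((a - 1) / c))) hg)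
      (K.inv_mem (allU ((d - 1) / c)))
    convert this using 1
    rw [U_inv, U_inv]
    unfold U L
    rw [mk4_mul _ _ (by linear_combination h), mk4_mul _ _ (by linear_combination h)]
    apply mk4_congr <;> field_simp
    · ring
    · linear_combination h
    · ring
    · ring
  have allL : ∀ y, L y ∈ K := by
    intro y
    have := K.mul_mem (sqL c hL ((y / c + 1) / 2)) (K.inv_mem (sqL c hL ((y / c - 1) / 2)))
    rw [L_inv, L_mul] at this
    convert this using 2
    field_simp
    ring
  exact top_of_UL K allU allL

theorem four_vals [Fintype F] (v : Fin 4 → F) (hv : Function.Injective v) :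
    ∃ i j, i ≠ j ∧ v i ≠ 0 ∧ v j ≠ 0 ∧ ∃ s, s ≠ 0 ∧ s ^ 2 = v i / v j := by
  classical
  -- two nonzero with the same character
  have hcard : ∃ i j, i ≠ j ∧ v i ≠ 0 ∧ v j ≠ 0 ∧ (IsSquare (v i) ↔ IsSquare (v j)) := by
    have three : ∀ i j k, i ≠ j → i ≠ k → j ≠ k → v i ≠ 0 → v j ≠ 0 → v k ≠ 0 →
        ∃ i j, i ≠ j ∧ v i ≠ 0 ∧ v j ≠ 0 ∧ (IsSquare (v i) ↔ IsSquare (v j)) := by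
      intro i j k hij hik hjk hi hj hk
      by_cases h1 : (IsSquare (v i) ↔ IsSquare (v j))
      · exact ⟨i, j, hij, hi, hj, h1⟩
      by_cases h2 : (IsSquare (v i) ↔ IsSquare (v k))
      · exact ⟨i, k, hik, hi, hk, h2⟩
      exact ⟨j, k, hjk, hj, hk, by tauto⟩
    have nz : ∀ i j, i ≠ j → v i = 0 → v j ≠ 0 := fun i j hij a b => hij (hv (a.trans b.symm))
    by_cases h0 : v 0 = 0
    · exact three 1 2 3 (by decide) (by decide) (by decide) (nz 0 _ (by decide) h0)
        (nz 0 _ (by decide) h0) (nz 0 _ (by decide) h0)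
    by_cases h1 : v 1 = 0
    · exact three 0 2 3 (by decide) (by decide) (by decide) h0
        (nz 1 _ (by decide) h1) (nz 1 _ (by decide) h1)
    by_cases h2 : v 2 = 0
    · exact three 0 1 3 (by decide) (by decide) (by decide) h0 h1 (nz 2 _ (by decide) h2)
    exact three 0 1 2 (by decide) (by decide) (by decide) h0 h1 h2
  obtain ⟨i, j, hij, hi, hj, hs⟩ := hcard
  refine ⟨i, j, hij, hi, hj, ?_⟩
  have hsq : IsSquare (v i * v j) := by
    by_cases h : IsSquare (v i)
    · exact h.mul (hs.1 h)
    · have hj' : ¬ IsSquare (v j) := fun h' => h (hs.2 h')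
      have h1 := (quadraticChar_neg_one_iff_not_isSquare (F := F)).2 h
      have h2 := (quadraticChar_neg_one_iff_not_isSquare (F := F)).2 hj'
      rw [← quadraticChar_one_iff_isSquare (mul_ne_zero hi hj), map_mul, h1, h2]; norm_num
  obtain ⟨s, hs⟩ := hsq
  have hs0 : s ≠ 0 := by rintro rfl; simp [hi, hj] at hs
  refine ⟨s / v j, div_ne_zero hs0 hj, ?_⟩
  field_simp
  linear_combination -hs

theorem torus_gen [Fintype F] (h2 : (2 : F) ≠ 0) (z : F) (hz : z ≠ 0)
    (hgen : ∀ t : F, t ≠ 0 → ∃ n : ℕ, t = z ^ n)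
    (hord : ∀ n : ℕ, 0 < n → n < 16 → z ^ n ≠ 1)
    (K : Subgroup (SL2 F)) (hD : D z hz ∈ K) (a b c d : F) (h : a * d - b * c = 1)
    (ha : a ≠ 0) (hb : b ≠ 0) (hc : c ≠ 0) (hd : d ≠ 0) (hg : mk4 a b c d h ∈ K) : K = ⊤ := by
  have allD : ∀ t ht, D t ht ∈ K := by
    intro t ht
    obtain ⟨n, rfl⟩ := hgen t ht
    rw [← D_pow z hz]
    exact K.pow_mem hD n
  have hpow : ∀ i j : ℕ, i < j → j < i + 16 → z ^ j ≠ z ^ i := by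
    intro i j hij hj he
    apply hord (j - i) (by omega) (by omega)
    have : z ^ j = z ^ i * z ^ (j - i) := by rw [← pow_add]; congr 1; omega
    rw [this] at he
    exact mul_left_cancel₀ (pow_ne_zero i hz) (he.trans (mul_one _).symm)
  set x : Fin 4 → F := fun i => (z ^ (i.val + 1)) ^ 2 with hx
  have hx1 : ∀ i, x i - 1 ≠ 0 := by
    intro i he
    apply hord ((i.val + 1) * 2) (by omega) (by omega)
    rw [pow_mul]; exact sub_eq_zero.1 he
  have hxinj : ∀ i j, i ≠ j → x i ≠ x j := by
    intro i j hij he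
    simp only [hx, ← pow_mul] at he
    rcases lt_or_gt_of_ne (fun h => hij (Fin.ext h) : i.val ≠ j.val) with h | h
    · exact hpow _ _ (by omega) (by omega) he.symm
    · exact hpow _ _ (by omega) (by omega) he
  have hxx : ∀ i j, i ≠ j → x i * x j ≠ 1 := by
    intro i j hij he
    simp only [hx, ← pow_mul, ← pow_add] at he
    exact hord _ (by omega) (by omega) he
  have hv : Function.Injective (fun i => a * d + (x i - 1)⁻¹) := by
    intro i j hij
    by_contra hne
    simp only [add_right_inj, _root_.inv_inj, sub_left_inj] at hij
    exact hxinj i j hne hij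
  obtain ⟨i, j, hij, hi, hj, s, hs0, hs⟩ := four_vals _ hv
  have hxi := hx1 i
  have hxj := hx1 j
  have hne := hxinj i j hij
  have hne1 := hxx i j hij
  set t := z ^ (i.val + 1) with ht
  set r := z ^ (j.val + 1) with hr
  have ht0 : t ≠ 0 := pow_ne_zero _ hz
  have hr0 : r ≠ 0 := pow_ne_zero _ hz
  have ext : x i = t ^ 2 := rfl
  have exr : x j = r ^ 2 := rfl
  rw [ext] at hxi hi hs hne hne1
  rw [exr] at hxj hj hs hne hne1
  have hm : K.carrier = K := rfl
  have hg' := K.inv_mem hg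
  have hw := K.mul_mem (K.mul_mem (K.mul_mem (K.mul_mem (K.mul_mem (K.mul_mem hg
    (K.inv_mem (allD t ht0))) hg') (allD s hs0)) hg) (allD r hr0)) hg'
  have hs' : s ^ 2 * ((a * d) * (r ^ 2 - 1) + 1) * (t ^ 2 - 1)
      = ((a * d) * (t ^ 2 - 1) + 1) * (r ^ 2 - 1) := by
    rw [hs]
    have e : a * d * (r ^ 2 - 1) + 1 ≠ 0 := by
      intro e
      apply hj
      field_simp
      rw [e, mul_zero]
    field_simp
  have hjj : a * d * (r ^ 2 - 1) + 1 ≠ 0 := by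
      intro e
      apply hj
      field_simp
      rw [e, mul_zero]
  obtain ⟨A, B, C, E, hdet, hM⟩ := exists_mk4
    (mk4 a b c d h * (D t ht0)⁻¹ * (mk4 a b c d h)⁻¹ * D s hs0 * mk4 a b c d h * D r hr0 * (mk4 a b c d h)⁻¹)
  rw [hM] at hw
  have hmat : (mk4 A B C E hdet : Matrix (Fin 2) (Fin 2) F) = !![a,b;c,d] * !![t⁻¹,0;0,t] *
      !![d,-b;-c,a] * !![s,0;0,s⁻¹] * !![a,b;c,d] * !![r,0;0,r⁻¹] * !![d,-b;-c,a] := by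
    rw [← hM, D_inv, mk4_inv _ (by linear_combination h)]
    simp only [Matrix.SpecialLinearGroup.coe_mul]
    simp [coe_mk4, D]
  have hstr : s * t * r ≠ 0 := mul_ne_zero (mul_ne_zero hs0 ht0) hr0
  have hC : C = 0 := by
    have h10 := congrFun (congrFun hmat 1) 0
    simp only [coe_mk4, Matrix.mul_fin_two] at h10
    simp at h10
    have : C * (s * t * r) = c * d * (s ^ 2 * (1 - t ^ 2) * (a * d * r ^ 2 - b * c)
        + (a * d * t ^ 2 - b * c) * (r ^ 2 - 1)) := by
      rw [h10]; field_simp; ring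
    have h3 : C * (s * t * r) = 0 := by
      have hbc : b * c = a * d - 1 := by linear_combination -h
      rw [this, hbc]; linear_combination (-c * d) * hs'
    exact (mul_eq_zero.1 h3).resolve_right hstr
  have hB : B ≠ 0 := by
    have h10 := congrFun (congrFun hmat 0) 1
    simp only [coe_mk4, Matrix.mul_fin_two] at h10
    simp at h10
    have : B * (s * t * r) = a * b * (s ^ 2 * (a * d - b * c * t ^ 2) * (1 - r ^ 2)
        + (t ^ 2 - 1) * (a * d - b * c * r ^ 2)) := by
      rw [h10]; field_simp; ring
    have hbc : b * c = a * d - 1 := by linear_combination -h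
    intro hB0
    rw [hB0, zero_mul, hbc] at this
    have h4 := (mul_eq_zero.1 this.symm).resolve_left (mul_ne_zero ha hb)
    clear hM hw hg hg' hmat hv this hs hi hj h hbc h10
    generalize a * d = m at *
    have h5 : (t ^ 2 - r ^ 2) * (t ^ 2 * r ^ 2 - 1) = 0 := by
      linear_combination (t ^ 2 - 1) * (m * (r ^ 2 - 1) + 1) * h4
        + (m - (m - 1) * t ^ 2) * (r ^ 2 - 1) * hs'
    rcases mul_eq_zero.1 h5 with h6 | h6
    · exact hne (sub_eq_zero.1 h6)
    · exact hne1 (sub_eq_zero.1 h6)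
  subst hC
  have hA : A ≠ 0 := by rintro rfl; simp at hdet
  have hU : U (A⁻¹ * B) ∈ K := by
    have := K.mul_mem (K.inv_mem (allD A hA)) hw
    convert this using 1
    rw [D_inv]
    unfold U D
    have e : E = A⁻¹ := by field_simp; linear_combination hdet
    subst e
    rw [mk4_mul _ _ (by field_simp; simp)]
    apply mk4_congr <;> field_simp <;> simp
  exact top_of_torus h2 K allD _ (mul_ne_zero (inv_ne_zero hA) hB) hU a b c d h hc hg

end gen
end Pf

namespace Pf
open Matrix

section gen2
variable {F : Type} [Field F]

def Gen (g1 g2 : SL2 F) : Prop := ∀ K : Subgroup (SL2 F), g1 ∈ K → g2 ∈ K → -1 ∈ K → K = ⊤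

def cd {R : Type} [CommRing R] (X Y : Matrix (Fin 2) (Fin 2) R) : R := (X * Y - Y * X).det

theorem neg_mem' (K : Subgroup (SL2 F)) (h : -1 ∈ K) {x : SL2 F} (hx : x ∈ K) : -x ∈ K := by
  rw [← neg_one_mul]; exact K.mul_mem h hx

theorem prime_top (hp : ∀ x : F, ∃ n : ℕ, x = n) (K : Subgroup (SL2 F)) (x y : F) (hx : x ≠ 0)
    (hy : y ≠ 0) (hU : U x ∈ K) (hL : L y ∈ K) : K = ⊤ := by
  apply top_of_UL
  · intro w
    obtain ⟨n, hn⟩ := hp (w / x)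
    have := K.pow_mem hU n
    rw [U_pow, ← hn, div_mul_cancel₀ _ hx] at this
    exact this
  · intro w
    obtain ⟨n, hn⟩ := hp (w / y)
    have := K.pow_mem hL n
    rw [L_pow, ← hn, div_mul_cancel₀ _ hy] at this
    exact this

theorem prime_pair1 (hp : ∀ x : F, ∃ n : ℕ, x = n) :
    ∃ A B : SL2 F, A * A = -1 ∧ (∃ N : Matrix (Fin 2) (Fin 2) F, (B : Matrix (Fin 2) (Fin 2) F) = 1 + N
      ∧ N * N = 0) ∧ Gen A B := by
  refine ⟨mk4 0 (-1) 1 0 (by ring), U 1, ?_, ⟨!![0,1;0,0], ?_, ?_⟩, ?_⟩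
  · apply Subtype.ext
    rw [Matrix.SpecialLinearGroup.coe_mul, Matrix.SpecialLinearGroup.coe_neg]
    simp [coe_mk4, Matrix.one_fin_two]
  · simp [U, coe_mk4, Matrix.one_fin_two]
  · ext i j; fin_cases i <;> fin_cases j <;> simp
  · intro K h1 h2 h3
    refine prime_top hp K 1 (-1) one_ne_zero (neg_ne_zero.2 one_ne_zero) h2 ?_
    have := K.mul_mem (K.mul_mem h1 h2) (K.inv_mem h1)
    convert this using 1
    unfold U L
    rw [mk4_inv _ (by ring), mk4_mul _ _ (by ring), mk4_mul _ _ (by ring)]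
    apply mk4_congr <;> ring

theorem big_pair1 [Fintype F] (h2 : (2 : F) ≠ 0) (z : F) (hz : z ≠ 0)
    (hgen : ∀ t : F, t ≠ 0 → ∃ n : ℕ, t = z ^ n)
    (hord : ∀ n : ℕ, 0 < n → n < 16 → z ^ n ≠ 1) :
    ∃ A B : SL2 F, A * A = -1 ∧ (∃ N : Matrix (Fin 2) (Fin 2) F, (B : Matrix (Fin 2) (Fin 2) F) = 1 + N
      ∧ N * N = 0) ∧ Gen A B := by
  have hz2 : z ^ 2 - 1 ≠ 0 := sub_ne_zero.2 (hord 2 (by norm_num) (by norm_num))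
  have hz4 : z ^ 4 - 1 ≠ 0 := sub_ne_zero.2 (hord 4 (by norm_num) (by norm_num))
  obtain ⟨a, ha⟩ : ∃ a, a = -2 * z / (z ^ 2 - 1) := ⟨_, rfl⟩
  have ha' : a * (z ^ 2 - 1) = -2 * z := by rw [ha]; field_simp
  have ha0 : a ≠ 0 := by
    rw [ha]; exact div_ne_zero (mul_ne_zero (neg_ne_zero.2 h2) hz) hz2
  have hc0 : -1 - a ^ 2 ≠ 0 := by
    intro h
    have h5 : (-1 - a ^ 2) * (z ^ 2 - 1) ^ 2 = - (z ^ 2 + 1) ^ 2 := by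
      linear_combination (-a * (z ^ 2 - 1) + 2 * z) * ha'
    rw [h, zero_mul] at h5
    have h6 : z ^ 2 + 1 = 0 := by
      have : (z ^ 2 + 1) ^ 2 = 0 := by linear_combination h5
      exact pow_eq_zero_iff (by norm_num) |>.1 this
    apply hz4
    linear_combination (z ^ 2 - 1) * h6
  have hA : a * (-a) - 1 * (-1 - a ^ 2) = 1 := by ring
  have hB : (-a * z) * (a * z⁻¹) - (-z⁻¹) * ((1 + a ^ 2) * z) = 1 := by field_simp; ring
  refine ⟨mk4 a 1 (-1 - a ^ 2) (-a) hA, mk4 (-a * z) (-z⁻¹) ((1 + a ^ 2) * z) (a * z⁻¹) hB, ?_,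
    ⟨!![-a * z - 1, -z⁻¹; (1 + a ^ 2) * z, a * z⁻¹ - 1], ?_, ?_⟩, ?_⟩
  · apply Subtype.ext
    rw [Matrix.SpecialLinearGroup.coe_mul, Matrix.SpecialLinearGroup.coe_neg]
    simp only [coe_mk4, Matrix.mul_fin_two, Matrix.SpecialLinearGroup.coe_one]
    ext i j; fin_cases i <;> fin_cases j <;> simp <;> ring
  · simp [coe_mk4, Matrix.one_fin_two]
  · rw [Matrix.mul_fin_two]
    have hh : a * z⁻¹ = 2 + a * z := by field_simp; linear_combination -ha'
    ext i j; fin_cases i <;> fin_cases j <;> simp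
    · field_simp; linear_combination a * ha'
    · rw [hh]; field_simp; ring
    · rw [hh]; ring
    · field_simp; linear_combination (-a) * ha'
  · intro K h1 h2' h3
    have hD : D z hz ∈ K := by
      have := K.mul_mem h1 h2'
      convert this using 1
      unfold D
      rw [mk4_mul _ _ (by field_simp; ring)]
      apply mk4_congr <;> field_simp <;> ring
    exact torus_gen h2 z hz hgen hord K hD _ _ _ _ hA ha0 one_ne_zero hc0 (neg_ne_zero.2 ha0) h1

theorem big_pair2 [Fintype F] (h2 : (2 : F) ≠ 0) (z : F) (hz : z ≠ 0)
    (hgen : ∀ t : F, t ≠ 0 → ∃ n : ℕ, t = z ^ n)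
    (hord : ∀ n : ℕ, 0 < n → n < 16 → z ^ n ≠ 1) :
    ∃ g1 g2 : SL2 F, Gen g1 g2 ∧ ¬ IsSquare (-cd (g1 : Matrix (Fin 2) (Fin 2) F) g2) := by
  obtain ⟨n, hn⟩ : ∃ n : F, ¬ IsSquare n := FiniteField.exists_nonsquare (by
    intro h
    apply h2
    have := CharP.cast_eq_zero F (ringChar F)
    rw [h] at this
    exact_mod_cast this)
  have hn0 : n ≠ 0 := by rintro rfl; exact hn ⟨0, by simp⟩
  have hn1 : 1 - n ≠ 0 := by intro h; exact hn ⟨1, by linear_combination -h⟩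
  have hz2 : z ^ 2 - 1 ≠ 0 := sub_ne_zero.2 (hord 2 (by norm_num) (by norm_num))
  have hg : (1 - n) * 1 - 1 * (-n) = 1 := by ring
  refine ⟨D z hz, mk4 (1 - n) 1 (-n) 1 hg, ?_, ?_⟩
  · intro K h1 h2' h3
    exact torus_gen h2 z hz hgen hord K h1 _ _ _ _ hg hn1 one_ne_zero (neg_ne_zero.2 hn0) one_ne_zero h2'
  · have : -cd (D z hz : Matrix (Fin 2) (Fin 2) F) (mk4 (1 - n) 1 (-n) 1 hg : SL2 F) = n * (z - z⁻¹) ^ 2 := by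
      unfold cd D
      rw [coe_mk4, coe_mk4, Matrix.mul_fin_two, Matrix.mul_fin_two, Matrix.det_fin_two]
      simp
      ring
    rw [this]
    rintro ⟨s, hs⟩
    have hzz : z - z⁻¹ ≠ 0 := by
      intro h
      apply hz2
      field_simp at h
      simpa using h
    apply hn
    refine ⟨s / (z - z⁻¹), ?_⟩
    field_simp at hs ⊢
    linear_combination hs

theorem pair2_7_11 (hp : ∀ x : F, ∃ n : ℕ, x = n) (h6 : (6 : F) ≠ 0) (h : ¬ IsSquare (-4 : F)) :
    ∃ g1 g2 : SL2 F, Gen g1 g2 ∧ ¬ IsSquare (-cd (g1 : Matrix (Fin 2) (Fin 2) F) g2) := by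
  refine ⟨mk4 (-2) (-1) (-1) (-1) (by norm_num), mk4 (-2) 1 1 (-1) (by norm_num), ?_, ?_⟩
  · intro K h1 h2 h3
    refine prime_top hp K 6 (-6) h6 (neg_ne_zero.2 h6) ?_ ?_
    · have := neg_mem' K h3 (K.mul_mem (K.mul_mem (K.mul_mem h1 h2) (K.inv_mem h1)) (K.inv_mem h2))
      convert this using 1
      unfold U
      rw [mk4_inv _ (by norm_num), mk4_inv _ (by norm_num), mk4_mul _ _ (by norm_num),
        mk4_mul _ _ (by norm_num), mk4_mul _ _ (by norm_num), neg_mk4 _ (by norm_num)]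
      apply mk4_congr <;> norm_num
    · have := neg_mem' K h3 (K.mul_mem (K.mul_mem (K.mul_mem (K.inv_mem h1) (K.inv_mem h2)) h1) h2)
      convert this using 1
      unfold L
      rw [mk4_inv _ (by norm_num), mk4_inv _ (by norm_num), mk4_mul _ _ (by norm_num),
        mk4_mul _ _ (by norm_num), mk4_mul _ _ (by norm_num), neg_mk4 _ (by norm_num)]
      apply mk4_congr <;> norm_num
  · convert h using 2
    unfold cd
    rw [coe_mk4, coe_mk4, Matrix.mul_fin_two, Matrix.mul_fin_two, Matrix.det_fin_two]
    simp
    norm_num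

theorem pair2_13 (hp : ∀ x : F, ∃ n : ℕ, x = n) (h13 : (13 : F) = 0) (h6 : (6 : F) ≠ 0)
    (h : ¬ IsSquare (-2 : F)) :
    ∃ g1 g2 : SL2 F, Gen g1 g2 ∧ ¬ IsSquare (-cd (g1 : Matrix (Fin 2) (Fin 2) F) g2) := by
  have hd : (1 : F) * 2 - 2 * 7 = 1 := by linear_combination -h13
  refine ⟨mk4 0 (-1) 1 1 (by norm_num), mk4 1 2 7 2 hd, ?_, ?_⟩
  · intro K h1 h2 h3
    refine prime_top hp K (-6) 6 (neg_ne_zero.2 h6) h6 ?_ ?_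
    · have := neg_mem' K h3 (K.mul_mem (K.mul_mem (K.mul_mem (K.mul_mem h2 (K.inv_mem h1)) h2) h2) h1)
      have e : (mk4 1 2 7 2 hd * (mk4 0 (-1) 1 1 (by norm_num))⁻¹ * mk4 1 2 7 2 hd * mk4 1 2 7 2 hd * mk4 0 (-1) 1 1 (by norm_num) : SL2 F) = -U (-6) := by
        apply Subtype.ext
        rw [Matrix.SpecialLinearGroup.coe_neg]
        unfold U
        rw [mk4_inv _ (by norm_num)]
        simp only [Matrix.SpecialLinearGroup.coe_mul, coe_mk4, Matrix.mul_fin_two]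
        ext i j; fin_cases i <;> fin_cases j <;> simp
        · linear_combination (1) * h13
        · linear_combination (0) * h13
        · linear_combination (12) * h13
        · linear_combination (-5) * h13
      rw [e, neg_neg] at this
      exact this
    · have := neg_mem' K h3 (K.mul_mem (K.mul_mem (K.mul_mem (K.mul_mem h1 h2) (K.inv_mem h1)) h2) h2)
      have e : (mk4 0 (-1) 1 1 (by norm_num) * mk4 1 2 7 2 hd * (mk4 0 (-1) 1 1 (by norm_num))⁻¹ * mk4 1 2 7 2 hd * mk4 1 2 7 2 hd : SL2 F) = -L 6 := by
        apply Subtype.ext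
        rw [Matrix.SpecialLinearGroup.coe_neg]
        unfold L
        rw [mk4_inv _ (by norm_num)]
        simp only [Matrix.SpecialLinearGroup.coe_mul, coe_mk4, Matrix.mul_fin_two]
        ext i j; fin_cases i <;> fin_cases j <;> simp
        · linear_combination (-17) * h13
        · linear_combination (-12) * h13
        · linear_combination (18) * h13
        · linear_combination (13) * h13
      rw [e, neg_neg] at this
      exact this
  · have : -cd ((mk4 0 (-1) 1 1 (by norm_num) : SL2 F) : Matrix (Fin 2) (Fin 2) F) (mk4 1 2 7 2 hd : SL2 F) = -2 := by
      unfold cd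
      rw [coe_mk4, coe_mk4, Matrix.mul_fin_two, Matrix.mul_fin_two, Matrix.det_fin_two]
      simp
      linear_combination (5) * h13
    rw [this]; exact h

theorem exists_gen [Fintype F] (hc : 17 ≤ Fintype.card F) : ∃ z : F, z ≠ 0 ∧
    (∀ t : F, t ≠ 0 → ∃ n : ℕ, t = z ^ n) ∧ (∀ n : ℕ, 0 < n → n < 16 → z ^ n ≠ 1) := by
  classical
  obtain ⟨g, hg⟩ := IsCyclic.exists_generator (α := Fˣ)
  refine ⟨g, g.ne_zero, ?_, ?_⟩
  · intro t ht
    have h1 := hg (Units.mk0 t ht)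
    rw [← mem_powers_iff_mem_zpowers] at h1
    obtain ⟨n, hn⟩ := h1
    exact ⟨n, by have := congrArg Units.val hn; simpa using this.symm⟩
  · intro n h0 hn h1
    have h2 : g ^ n = 1 := Units.ext (by simpa using h1)
    have h3 := orderOf_le_of_pow_eq_one h0 h2
    rw [orderOf_eq_card_of_forall_mem_zpowers hg, Nat.card_units, Nat.card_eq_fintype_card] at h3
    omega

theorem all_pairs [Fintype F] (p k : ℕ) (hp : p.Prime) (hp3 : 3 ≤ p)
    (hcard : Fintype.card F = p ^ k) (hq7 : 7 ≤ p ^ k) (hq9 : p ^ k ≠ 9) :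
    (∃ A B : SL2 F, A * A = -1 ∧ (∃ N : Matrix (Fin 2) (Fin 2) F, (B : Matrix (Fin 2) (Fin 2) F) = 1 + N
      ∧ N * N = 0) ∧ Gen A B) ∧
    ∃ g1 g2 : SL2 F, Gen g1 g2 ∧ ¬ IsSquare (-cd (g1 : Matrix (Fin 2) (Fin 2) F) g2) := by
  by_cases hq : 17 ≤ p ^ k
  · obtain ⟨z, hz, h1, h2⟩ := exists_gen (F := F) (by omega)
    have h20 : (2 : F) ≠ 0 := by
      intro h
      have := Fact.mk hp
      have hch : CharP F p := charP_of_card_eq_prime_pow hcard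
      have h3 := (CharP.cast_eq_zero_iff F p 2).1 (by exact_mod_cast h)
      exact absurd (Nat.le_of_dvd (by norm_num) h3) (by omega)
    exact ⟨big_pair1 h20 z hz h1 h2, big_pair2 h20 z hz h1 h2⟩
  · have hk0 : k ≠ 0 := by rintro rfl; simp at hq7
    have hpp : IsPrimePow (p ^ k) := hp.isPrimePow.pow hk0
    have hodd : Odd (p ^ k) := (hp.odd_of_ne_two (by omega)).pow
    have hr : p ^ k = 7 ∨ p ^ k = 11 ∨ p ^ k = 13 := by
      have h15 : p ^ k ≠ 15 := by
        intro h
        have hd3 : 3 ∣ p ^ k := by rw [h]; norm_num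
        have hd5 : 5 ∣ p ^ k := by rw [h]; norm_num
        have e3 := (Nat.prime_dvd_prime_iff_eq Nat.prime_three hp).1 (Nat.prime_three.dvd_of_dvd_pow hd3)
        have e5 := (Nat.prime_dvd_prime_iff_eq Nat.prime_five hp).1 (Nat.prime_five.dvd_of_dvd_pow hd5)
        omega
      obtain ⟨m, hm⟩ := hodd
      omega
    have key : ∀ r : ℕ, r.Prime → p ^ k = r → (∀ x : F, ∃ n : ℕ, x = n) ∧ ∃ e : F →+* ZMod r, (r : F) = 0 := by
      intro r hr he
      have := Fact.mk hr
      rw [he] at hcard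
      have hch : CharP F r := charP_of_card_eq_prime_pow (f := 1) (by rw [hcard, pow_one])
      let e := ZMod.ringEquiv F hcard
      refine ⟨fun x => ?_, e.symm.toRingHom, CharP.cast_eq_zero F r⟩
      refine ⟨(e.symm x).val, ?_⟩
      have : e ((e.symm x).val : ZMod r) = ((e.symm x).val : F) := map_natCast e _
      rw [← this, ZMod.natCast_zmod_val, RingEquiv.apply_symm_apply]
    rcases hr with hr | hr | hr
    · obtain ⟨h1, e, h2⟩ := key 7 (by norm_num) hr
      refine ⟨prime_pair1 h1, pair2_7_11 h1 ?_ ?_⟩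
      · intro h; have := congrArg e h; rw [map_ofNat, map_zero] at this; revert this; decide
      · intro h; have := h.map e; rw [map_neg, map_ofNat] at this; revert this; decide
    · obtain ⟨h1, e, h2⟩ := key 11 (by norm_num) hr
      refine ⟨prime_pair1 h1, pair2_7_11 h1 ?_ ?_⟩
      · intro h; have := congrArg e h; rw [map_ofNat, map_zero] at this; revert this; decide
      · intro h; have := h.map e; rw [map_neg, map_ofNat] at this; revert this; decide
    · obtain ⟨h1, e, h2⟩ := key 13 (by norm_num) hr
      refine ⟨prime_pair1 h1, pair2_13 h1 (by exact_mod_cast h2) ?_ ?_⟩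
      · intro h; have := congrArg e h; rw [map_ofNat, map_zero] at this; revert this; decide
      · intro h; have := h.map e; rw [map_neg, map_ofNat] at this; revert this; decide

end gen2
end Pf

namespace Pf
open Matrix

section alg
variable {R : Type} [CommRing R]

local notation "M2" => Matrix (Fin 2) (Fin 2) R

def cb (A N : M2) (c0 c1 c2 c3 : R) : M2 :=
  c0 • (1 : M2) + c1 • A + c2 • N + c3 • (A * N)

theorem cb_add (A N : M2) (c0 c1 c2 c3 d0 d1 d2 d3 : R) :
    cb A N c0 c1 c2 c3 + cb A N d0 d1 d2 d3 = cb A N (c0 + d0) (c1 + d1) (c2 + d2) (c3 + d3) := by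
  unfold cb; module

theorem cb_smul (A N : M2) (r c0 c1 c2 c3 : R) :
    r • cb A N c0 c1 c2 c3 = cb A N (r * c0) (r * c1) (r * c2) (r * c3) := by
  unfold cb; module

theorem cb_neg (A N : M2) (c0 c1 c2 c3 : R) :
    - cb A N c0 c1 c2 c3 = cb A N (-c0) (-c1) (-c2) (-c3) := by
  unfold cb; module

/-- standing relations -/
structure Rel (A N : M2) (w : R) : Prop where
  hA : A * A = -1
  hN : N * N = 0
  hNA : N * A = w • (1 : M2) - A * N
  hcd : cd A N = - w ^ 2

theorem rel_of (A N : M2) (hA : A.trace = 0) (hA1 : A.det = 1) (hN : N.trace = 0) (hN0 : N.det = 0) :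
    Rel A N (A * N).trace := by
  rw [Matrix.trace_fin_two] at hA hN
  rw [Matrix.det_fin_two] at hA1 hN0
  have e1 : A 1 1 = - A 0 0 := by linear_combination hA
  have e2 : N 1 1 = - N 0 0 := by linear_combination hN
  rw [e1] at hA1
  rw [e2] at hN0
  refine ⟨?_, ?_, ?_, ?_⟩
  · ext i j; fin_cases i <;> fin_cases j <;> simp [Matrix.mul_apply, Fin.sum_univ_two, e1] 
    · linear_combination -hA1
    · ring
    · ring
    · linear_combination -hA1
  · ext i j; fin_cases i <;> fin_cases j <;> simp [Matrix.mul_apply, Fin.sum_univ_two, e2]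
    · linear_combination -hN0
    · ring
    · ring
    · linear_combination -hN0
  · ext i j; fin_cases i <;> fin_cases j <;> simp [Matrix.mul_apply, Fin.sum_univ_two, e1, e2, Matrix.trace_fin_two] <;> ring
  · unfold cd
    simp [Matrix.det_fin_two, Matrix.mul_apply, Fin.sum_univ_two, e1, e2, Matrix.trace_fin_two]
    linear_combination (4 * (N 0 0 * -N 0 0 - N 0 1 * N 1 0)) * hA1 + 4 * hN0

theorem A_cb {A N : M2} {w : R} (h : Rel A N w) (c0 c1 c2 c3 : R) :
    A * cb A N c0 c1 c2 c3 = cb A N (-c1) c0 (-c3) c2 := by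
  unfold cb
  simp only [mul_add, mul_smul_comm, mul_one, ← mul_assoc, h.hA]
  simp only [neg_mul, one_mul]
  module

theorem N_cb {A N : M2} {w : R} (h : Rel A N w) (c0 c1 c2 c3 : R) :
    N * cb A N c0 c1 c2 c3 = cb A N (c1 * w) 0 (c0 + c3 * w) (-c1) := by
  unfold cb
  simp only [mul_add, mul_smul_comm, mul_one, ← mul_assoc, h.hNA, h.hN]
  simp only [sub_mul, mul_assoc, h.hN, smul_mul_assoc, one_mul, mul_zero]
  module

theorem cb_mul {A N : M2} {w : R} (h : Rel A N w) (c0 c1 c2 c3 d0 d1 d2 d3 : R) :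
    cb A N c0 c1 c2 c3 * cb A N d0 d1 d2 d3 = cb A N (c0*d0-c1*d1+w*c2*d1) (c0*d1+c1*d0+w*c3*d1)
      (c0*d2+c2*d0-c1*d3+w*c2*d3+c3*d1) (c0*d3+c3*d0+c1*d2-c2*d1+w*c3*d3) := by
  have : cb A N c0 c1 c2 c3 * cb A N d0 d1 d2 d3 = c0 • cb A N d0 d1 d2 d3
      + c1 • (A * cb A N d0 d1 d2 d3) + c2 • (N * cb A N d0 d1 d2 d3)
      + c3 • (A * (N * cb A N d0 d1 d2 d3)) := by
    conv_lhs => rw [cb]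
    simp only [add_mul, smul_mul_assoc, one_mul, mul_assoc]
  rw [this, N_cb h, A_cb h, A_cb h]
  simp only [cb_smul, cb_add]
  congr 1 <;> ring

def d3 (c1 c2 c3 d1 d2 d3 e1 e2 e3 : R) : R :=
  c1 * (d2 * e3 - d3 * e2) - c2 * (d1 * e3 - d3 * e1) + c3 * (d1 * e2 - d2 * e1)

def T1 (M : M2) : R := M 0 0 - M 1 1
def T2 (M : M2) : R := M 0 1
def T3 (M : M2) : R := M 1 0

theorem T_cb (A N : M2) (c0 c1 c2 c3 : R) :
    T1 (cb A N c0 c1 c2 c3) = c1 * T1 A + c2 * T1 N + c3 * T1 (A * N) ∧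
    T2 (cb A N c0 c1 c2 c3) = c1 * T2 A + c2 * T2 N + c3 * T2 (A * N) ∧
    T3 (cb A N c0 c1 c2 c3) = c1 * T3 A + c2 * T3 N + c3 * T3 (A * N) := by
  refine ⟨?_, ?_, ?_⟩
  · simp [cb, T1]; ring
  · simp [cb, T2]
  · simp [cb, T3]

theorem cd_eq (X Y : M2) : cd X Y = - d3 (T1 X) (T2 X) (T3 X) (T1 Y) (T2 Y) (T3 Y)
    (T1 (X * Y)) (T2 (X * Y)) (T3 (X * Y)) := by
  simp [cd, d3, T1, T2, T3, Matrix.det_fin_two, Matrix.mul_apply, Fin.sum_univ_two]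
  ring

theorem cd_change (X Y X' Y' : M2) (c0 c1 c2 c3 d0 d1 d2 d3' e0 e1 e2 e3 : R)
    (h1 : X' = cb X Y c0 c1 c2 c3) (h2 : Y' = cb X Y d0 d1 d2 d3')
    (h3 : X' * Y' = cb X Y e0 e1 e2 e3) :
    cd X' Y' = d3 c1 c2 c3 d1 d2 d3' e1 e2 e3 * cd X Y := by
  rw [cd_eq, cd_eq, h3, h1, h2]
  obtain ⟨a1, a2, a3⟩ := T_cb X Y c0 c1 c2 c3
  obtain ⟨b1, b2, b3⟩ := T_cb X Y d0 d1 d2 d3'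
  obtain ⟨f1, f2, f3⟩ := T_cb X Y e0 e1 e2 e3
  rw [a1, a2, a3, b1, b2, b3, f1, f2, f3]
  unfold d3
  ring

theorem cd_neg (X Y : M2) : cd (-X) Y = cd X Y ∧ cd X (-Y) = cd X Y := by
  constructor <;> simp [cd, Matrix.det_fin_two, Matrix.mul_apply, Fin.sum_univ_two] <;> ring

theorem cd_add_one (X Y : M2) : cd X (1 + Y) = cd X Y := by
  unfold cd; congr 1; noncomm_ring

theorem cd_comm (X Y : M2) (h : X * Y = Y * X) : cd X Y = 0 := by
  unfold cd; rw [h, sub_self]; simp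

theorem cd_map {S : Type} [CommRing S] (f : R →+* S) (X Y : M2) :
    cd (f.mapMatrix X) (f.mapMatrix Y) = f (cd X Y) := by
  unfold cd; rw [RingHom.map_det, map_sub, map_mul, map_mul]

/-- left multiplication in the span of `1, X, Y, XY` when det = 1 -/
theorem X_span (X Y : M2) (hX : X.det = 1) (c0 c1 c2 c3 : R) :
    X * cb X Y c0 c1 c2 c3 = cb X Y (-c1) (c0 + X.trace * c1) (-c3) (c2 + X.trace * c3) := by
  have h : X * X = X.trace • X - 1 := by
    rw [Matrix.det_fin_two] at hX
    ext i j; fin_cases i <;> fin_cases j <;> simp [Matrix.mul_apply, Fin.sum_univ_two, Matrix.trace_fin_two]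
    · linear_combination -hX
    · ring
    · ring
    · linear_combination -hX
  unfold cb
  simp only [mul_add, mul_smul_comm, mul_one, ← mul_assoc, h]
  simp only [sub_mul, smul_mul_assoc, one_mul]
  module

theorem Y_span (X Y : M2) (hY : Y.det = 1) (c0 c1 c2 c3 : R) :
    ∃ e0 e1 e2 e3, Y * cb X Y c0 c1 c2 c3 = cb X Y e0 e1 e2 e3 := by
  have h : Y * Y = Y.trace • Y - 1 := by
    rw [Matrix.det_fin_two] at hY
    ext i j; fin_cases i <;> fin_cases j <;> simp [Matrix.mul_apply, Fin.sum_univ_two, Matrix.trace_fin_two]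
    · linear_combination -hY
    · ring
    · ring
    · linear_combination -hY
  have h2 : Y * X = X.trace • Y + Y.trace • X + ((X * Y).trace - X.trace * Y.trace) • (1 : M2) - X * Y := by
    ext i j; fin_cases i <;> fin_cases j <;> simp [Matrix.mul_apply, Fin.sum_univ_two, Matrix.trace_fin_two] <;> ring
  set t := X.trace
  set s := Y.trace
  set u := (X * Y).trace - t * s
  have h3 : Y * (X * Y) = t • (s • Y - 1) + s • (X * Y) + u • Y - (s • (X * Y) - X) := by
    rw [← mul_assoc, h2]
    simp only [sub_mul, add_mul, smul_mul_assoc, one_mul, mul_assoc, h]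
    simp only [mul_sub, mul_smul_comm, mul_one]
  refine ⟨-c2 + c1 * u - c3 * t, c1 * s + c3, c0 + c1 * t + c2 * s + c3 * (t * s + u), - c1, ?_⟩
  unfold cb
  simp only [mul_add, mul_smul_comm, mul_one, h, h2, h3]
  module

theorem pow_one_add (N : M2) (hN : N * N = 0) (n : ℕ) : (1 + N) ^ n = 1 + (n : R) • N := by
  induction n with
  | zero => simp
  | succ n ih =>
    rw [pow_succ, ih]
    simp only [add_mul, mul_add, one_mul, mul_one, smul_mul_assoc, hN, smul_zero]
    push_cast
    module

end alg
end Pf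

namespace Pf
open Matrix Polynomial

section grp

abbrev SLR (R : Type) [CommRing R] : Type := Matrix.SpecialLinearGroup (Fin 2) R
abbrev PSLR (R : Type) [CommRing R] : Type := SLR R ⧸ Subgroup.center (SLR R)

def mkP {R : Type} [CommRing R] : SLR R →* PSLR R := QuotientGroup.mk' _

theorem center_pm {R : Type} [CommRing R] [IsDomain R] (x : SLR R) :
    x ∈ Subgroup.center (SLR R) ↔ x = 1 ∨ x = -1 := by
  rw [Matrix.SpecialLinearGroup.mem_center_iff]
  constructor
  · rintro ⟨r, hr, h⟩
    simp only [Fintype.card_fin] at hr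
    rcases mul_self_eq_one_iff.1 ((sq r).symm.trans hr) with h1 | h1
    · left; apply Subtype.ext; rw [← h, h1]; simp
    · right; apply Subtype.ext; rw [← h, h1, Matrix.SpecialLinearGroup.coe_neg]
      ext i j; fin_cases i <;> fin_cases j <;> simp
  · rintro (rfl | rfl)
    · exact ⟨1, by simp, by simp⟩
    · exact ⟨-1, by simp, by ext i j; fin_cases i <;> fin_cases j <;> simp⟩

theorem mkP_eq {R : Type} [CommRing R] [IsDomain R] (x y : SLR R) :
    mkP x = mkP y ↔ x = y ∨ x = -y := by
  unfold mkP
  rw [QuotientGroup.mk'_eq_mk']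
  constructor
  · rintro ⟨z, hz, h⟩
    rcases (center_pm z).1 hz with rfl | rfl
    · left; simpa using h
    · right; rw [← h]; simp
  · rintro (rfl | rfl)
    · exact ⟨1, Subgroup.one_mem _, by simp⟩
    · exact ⟨-1, (center_pm _).2 (Or.inr rfl), by simp⟩

theorem mkP_surj {R : Type} [CommRing R] : Function.Surjective (mkP (R := R)) :=
  QuotientGroup.mk'_surjective _

theorem exists_hom {H : Type} [Group H] (n : ℕ) (x : H) (h : x ^ n = 1) :
    ∃ f : Cyc n →* H, f (Multiplicative.ofAdd 1) = x := by
  let g : ℤ →+ Additive H := (zmultiplesHom (Additive H)) (Additive.ofMul x)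
  have hg : g n = 0 := by
    simp only [g, zmultiplesHom_apply, natCast_zsmul]
    exact h
  let k : ZMod n →+ Additive H := ZMod.lift n ⟨g, hg⟩
  refine ⟨AddMonoidHom.toMultiplicativeLeft k, ?_⟩
  have : k 1 = Additive.ofMul x := by
    have := ZMod.lift_coe n ⟨g, hg⟩ 1
    simp only [Int.cast_one] at this
    rw [this]
    simp [g]
  simp [this]

theorem cyc_gen (n : ℕ) [NeZero n] (m : Cyc n) : ∃ k : ℕ, m = (Multiplicative.ofAdd (1 : ZMod n)) ^ k := by
  refine ⟨(Multiplicative.toAdd m).val, ?_⟩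
  rw [← ofAdd_nsmul]
  simp

abbrev ga (p : ℕ) : Monoid.Coprod (Cyc 2) (Cyc p) := Monoid.Coprod.inl (Multiplicative.ofAdd 1)
abbrev gb (p : ℕ) : Monoid.Coprod (Cyc 2) (Cyc p) := Monoid.Coprod.inr (Multiplicative.ofAdd 1)

theorem all_mem {H : Type} [Group H] (p : ℕ) [NeZero p] (f : Monoid.Coprod (Cyc 2) (Cyc p) →* H)
    (T : Subgroup H) (ha : f (ga p) ∈ T) (hb : f (gb p) ∈ T) (g) : f g ∈ T := by
  induction g using Monoid.Coprod.induction_on with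
  | inl m =>
    obtain ⟨k, rfl⟩ := cyc_gen 2 m
    rw [map_pow, map_pow]; exact T.pow_mem ha k
  | inr m =>
    obtain ⟨k, rfl⟩ := cyc_gen p m
    rw [map_pow, map_pow]; exact T.pow_mem hb k
  | mul x y hx hy => rw [map_mul]; exact T.mul_mem hx hy

theorem exists_lift {H : Type} [Group H] (p : ℕ) (x y : H) (hx : x ^ 2 = 1) (hy : y ^ p = 1) :
    ∃ f : Monoid.Coprod (Cyc 2) (Cyc p) →* H, f (ga p) = x ∧ f (gb p) = y := by
  obtain ⟨f1, h1⟩ := exists_hom 2 x hx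
  obtain ⟨f2, h2⟩ := exists_hom p y hy
  exact ⟨Monoid.Coprod.lift f1 f2, by simp [h1], by simp [h2]⟩

theorem hom_eq {H : Type} [Group H] (p : ℕ) [NeZero p] (f f' : Monoid.Coprod (Cyc 2) (Cyc p) →* H)
    (ha : f (ga p) = f' (ga p)) (hb : f (gb p) = f' (gb p)) : f = f' := by
  apply Monoid.Coprod.hom_ext
  · refine MonoidHom.ext fun m => ?_
    obtain ⟨k, rfl⟩ := cyc_gen 2 m
    simp only [MonoidHom.comp_apply, map_pow]
    exact congrArg (· ^ k) ha
  · refine MonoidHom.ext fun m => ?_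
    obtain ⟨k, rfl⟩ := cyc_gen p m
    simp only [MonoidHom.comp_apply, map_pow]
    exact congrArg (· ^ k) hb

theorem ga_sq (p : ℕ) : ga p ^ 2 = 1 := by
  rw [← map_pow, ← ofAdd_nsmul]
  have : (2 • (1 : ZMod 2)) = 0 := by decide
  rw [this]; simp

theorem gb_pow (p : ℕ) : gb p ^ p = 1 := by
  rw [← map_pow, ← ofAdd_nsmul]
  have : (p • (1 : ZMod p)) = 0 := by simp
  rw [this]; simp

end grp
end Pf

namespace Pf
open Matrix Polynomial

section core

theorem coe_inv_eq {R : Type} [CommRing R] (x : SLR R) :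
    ((x⁻¹ : SLR R) : Matrix (Fin 2) (Fin 2) R) =
      (x : Matrix (Fin 2) (Fin 2) R).trace • (1 : Matrix (Fin 2) (Fin 2) R) - (x : Matrix (Fin 2) (Fin 2) R) := by
  rw [Matrix.SpecialLinearGroup.coe_inv, Matrix.adjugate_fin_two]
  ext i j; fin_cases i <;> fin_cases j <;> simp [Matrix.trace_fin_two]

theorem span_closure {R : Type} [CommRing R] (x1 x2 x : SLR R)
    (hx : x ∈ Subgroup.closure {x1, x2}) :
    ∃ c0 c1 c2 c3 : R, (x : Matrix (Fin 2) (Fin 2) R) = cb (x1 : Matrix (Fin 2) (Fin 2) R) x2 c0 c1 c2 c3 := by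
  induction hx using Subgroup.closure_induction_left with
  | one => exact ⟨1, 0, 0, 0, by simp [cb]⟩
  | mul_left x hx y hy ih =>
    obtain ⟨c0, c1, c2, c3, h⟩ := ih
    rw [Matrix.SpecialLinearGroup.coe_mul, h]
    rcases hx with rfl | rfl
    · exact ⟨_, _, _, _, X_span _ _ x.det_coe _ _ _ _⟩
    · exact Y_span _ _ x.det_coe _ _ _ _
  | inv_mul_cancel x hx y hy ih =>
    obtain ⟨c0, c1, c2, c3, h⟩ := ih
    rw [Matrix.SpecialLinearGroup.coe_mul, h, coe_inv_eq, sub_mul, smul_mul_assoc, one_mul, cb_smul, sub_eq_add_neg]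
    rcases hx with rfl | rfl
    · rw [X_span _ _ x.det_coe, cb_neg, cb_add]
      exact ⟨_, _, _, _, rfl⟩
    · obtain ⟨e0, e1, e2, e3, he⟩ := Y_span (x1 : Matrix (Fin 2) (Fin 2) R) _ x.det_coe c0 c1 c2 c3
      rw [he, cb_neg, cb_add]
      exact ⟨_, _, _, _, rfl⟩

variable {F : Type} [Field F]

def Shp (A N M : Matrix (Fin 2) (Fin 2) F[X]) : Prop :=
  ∃ c0 c1 c2 c3 : F[X], M = cb A N c0 c1 c2 c3 ∧
    ((c0.eval 0 ^ 2 = 1 ∧ c1.eval 0 = 0 ∧ c3.eval 0 = 0) ∨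
     (c0.eval 0 = 0 ∧ c1.eval 0 ^ 2 = 1 ∧ c2.eval 0 = 0))

theorem Shp.neg {A N M : Matrix (Fin 2) (Fin 2) F[X]} (h : Shp A N M) : Shp A N (-M) := by
  obtain ⟨c0, c1, c2, c3, h, h'⟩ := h
  refine ⟨_, _, _, _, by rw [h, cb_neg], ?_⟩
  simpa using h'

theorem Shp.A_mul {A N M : Matrix (Fin 2) (Fin 2) F[X]} {w : F[X]} (hr : Rel A N w)
    (h : Shp A N M) : Shp A N (A * M) := by
  obtain ⟨c0, c1, c2, c3, h, h'⟩ := h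
  refine ⟨_, _, _, _, by rw [h, A_cb hr], ?_⟩
  simp only [eval_neg, neg_sq, neg_eq_zero]
  tauto

theorem Shp.B_mul {A N M : Matrix (Fin 2) (Fin 2) F[X]} {w : F[X]} (hr : Rel A N w)
    (hw : w.eval 0 = 0) (h : Shp A N M) : Shp A N ((1 + N) * M) := by
  obtain ⟨c0, c1, c2, c3, h, h'⟩ := h
  refine ⟨_, _, _, _, by rw [h, add_mul, one_mul, N_cb hr, cb_add], ?_⟩
  simp only [eval_add, eval_mul, eval_neg, hw, eval_zero, mul_zero, add_zero]
  rcases h' with ⟨h1, h2, h3⟩ | ⟨h1, h2, h3⟩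
  · left; simp [h1, h2, h3]
  · right; simp [h1, h2, h3]

theorem Shp.B'_mul {A N M : Matrix (Fin 2) (Fin 2) F[X]} {w : F[X]} (hr : Rel A N w)
    (hw : w.eval 0 = 0) (h : Shp A N M) : Shp A N ((1 - N) * M) := by
  obtain ⟨c0, c1, c2, c3, h, h'⟩ := h
  refine ⟨_, _, _, _, by rw [h, sub_mul, one_mul, N_cb hr, sub_eq_add_neg, cb_neg, cb_add], ?_⟩
  simp only [eval_add, eval_mul, eval_neg, hw, eval_zero, mul_zero, add_zero]
  rcases h' with ⟨h1, h2, h3⟩ | ⟨h1, h2, h3⟩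
  · left; simp [h1, h2, h3]
  · right; simp [h1, h2, h3]

theorem shp_closure {A N : Matrix (Fin 2) (Fin 2) F[X]} {w : F[X]} (hr : Rel A N w)
    (hw : w.eval 0 = 0) (a b x : SLR F[X]) (ha : (a : Matrix (Fin 2) (Fin 2) F[X]) = A)
    (hb : (b : Matrix (Fin 2) (Fin 2) F[X]) = 1 + N) (hx : x ∈ Subgroup.closure {a, b}) :
    Shp A N x := by
  have ia : ((a⁻¹ : SLR F[X]) : Matrix (Fin 2) (Fin 2) F[X]) = -A := by
    have : a * (-a) = 1 := by
      apply Subtype.ext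
      rw [Matrix.SpecialLinearGroup.coe_mul, Matrix.SpecialLinearGroup.coe_neg, ha, mul_neg, hr.hA, neg_neg]
      rfl
    rw [inv_eq_of_mul_eq_one_right this, Matrix.SpecialLinearGroup.coe_neg, ha]
  have ib : ((b⁻¹ : SLR F[X]) : Matrix (Fin 2) (Fin 2) F[X]) = 1 - N := by
    have h1 : ((b⁻¹ : SLR F[X]) : Matrix (Fin 2) (Fin 2) F[X]) * (1 + N) = 1 := by
      rw [← hb, ← Matrix.SpecialLinearGroup.coe_mul]; simp
    have h2 : (1 + N) * (1 - N) = 1 := by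
      have : (1 + N) * (1 - N) = 1 - N * N := by noncomm_ring
      rw [this, hr.hN, sub_zero]
    exact left_inv_eq_right_inv h1 h2
  induction hx using Subgroup.closure_induction_left with
  | one => exact ⟨1, 0, 0, 0, by simp [cb], by simp⟩
  | mul_left x hx y hy ih =>
    rw [Matrix.SpecialLinearGroup.coe_mul]
    rcases hx with rfl | rfl
    · rw [ha]; exact ih.A_mul hr
    · rw [hb]; exact ih.B_mul hr hw
  | inv_mul_cancel x hx y hy ih =>
    rw [Matrix.SpecialLinearGroup.coe_mul]
    rcases hx with rfl | rfl
    · rw [ia, neg_mul]; exact (ih.A_mul hr).neg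
    · rw [ib]; exact ih.B'_mul hr hw

theorem core {A N : Matrix (Fin 2) (Fin 2) F[X]} {w : F[X]} (hr : Rel A N w)
    (hw : w.eval 0 = 0) (X Y : Matrix (Fin 2) (Fin 2) F[X]) (hX : Shp A N X) (hY : Shp A N Y)
    (h1 : ∃ c0 c1 c2 c3, A = cb X Y c0 c1 c2 c3) (h2 : ∃ c0 c1 c2 c3, 1 + N = cb X Y c0 c1 c2 c3)
    (h3 : ∃ c0 c1 c2 c3, A * (1 + N) = cb X Y c0 c1 c2 c3) :
    IsSquare (-((cd X Y).eval 1)) := by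
  obtain ⟨a0, a1, a2, a3, ha⟩ := h1
  obtain ⟨b0, b1, b2, b3, hb⟩ := h2
  obtain ⟨f0, f1, f2, f3, hf⟩ := h3
  obtain ⟨c0, c1, c2, c3, hc, hc'⟩ := hX
  obtain ⟨d0, d1, d2, d3', hd, hd'⟩ := hY
  have e := cb_mul hr c0 c1 c2 c3 d0 d1 d2 d3'
  rw [← hc, ← hd] at e
  have k1 := cd_change _ _ _ _ _ _ _ _ _ _ _ _ _ _ _ _ hc hd e
  have k2 := cd_change _ _ _ _ _ _ _ _ _ _ _ _ _ _ _ _ ha hb hf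
  rw [cd_add_one] at k2
  rw [hr.hcd] at k1 k2
  set P := d3 a1 a2 a3 b1 b2 b3 f1 f2 f3
  obtain ⟨Q, hQ⟩ : ∃ Q, Q = d3 c1 c2 c3 d1 d2 d3' (c0*d1+c1*d0+w*c3*d1)
      (c0*d2+c2*d0-c1*d3'+w*c2*d3'+c3*d1) (c0*d3'+c3*d0+c1*d2-c2*d1+w*c3*d3') := ⟨_, rfl⟩
  rw [← hQ] at k1
  have hsq : IsSquare (Q.eval 0) := by
    have : Q.eval 0 = _ := congrArg (eval 0) hQ
    simp only [d3, eval_add, eval_mul, eval_sub, hw] at this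
    rw [this]
    generalize c0.eval 0 = c0 at *
    generalize c1.eval 0 = c1 at *
    generalize c2.eval 0 = c2 at *
    generalize c3.eval 0 = c3 at *
    generalize d0.eval 0 = d0 at *
    generalize d1.eval 0 = d1 at *
    generalize d2.eval 0 = d2 at *
    generalize d3'.eval 0 = d3' at *
    rcases hc' with ⟨x1, x2, x3⟩ | ⟨x1, x2, x3⟩ <;> rcases hd' with ⟨y1, y2, y3⟩ | ⟨y1, y2, y3⟩
    · refine ⟨0, ?_⟩; rw [x2, x3, y2, y3]; ring
    · refine ⟨c2 * d1, ?_⟩; rw [x2, x3, y1, y3]; ring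
    · refine ⟨c1 * d2, ?_⟩; rw [x1, x3, y2, y3]; ring
    · refine ⟨c3 * d1 - c1 * d3', ?_⟩; rw [x1, x3, y1, y3]; ring
  by_cases h0 : w = 0
  · rw [k1, h0]; simp
  have hu : P * Q = 1 := by
    rw [k1] at k2
    have hww : - w ^ 2 ≠ 0 := neg_ne_zero.2 (pow_ne_zero _ h0)
    apply mul_right_cancel₀ hww
    rw [one_mul, mul_assoc]; exact k2.symm
  obtain ⟨r, _, hr'⟩ := Polynomial.isUnit_iff.1 (IsUnit.of_mul_eq_one_right P hu)
  rw [← hr', eval_C] at hsq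
  obtain ⟨s, hs⟩ := hsq
  rw [k1, ← hr', hs]
  refine ⟨s * w.eval 1, ?_⟩
  simp
  ring

end core
end Pf

namespace Pf
open Matrix Polynomial

section fin
variable {F : Type} [Field F]

theorem sq_one (h2 : (2 : F) ≠ 0) (A : SLR F) (h : A * A = 1) : A = 1 ∨ A = -1 := by
  obtain ⟨a, b, c, d, hd, rfl⟩ := exists_mk4 A
  have hm := congrArg (fun M : SLR F => (M : Matrix (Fin 2) (Fin 2) F)) h
  simp only [Matrix.SpecialLinearGroup.coe_mul, coe_mk4, Matrix.mul_fin_two,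
    Matrix.SpecialLinearGroup.coe_one, Matrix.one_fin_two] at hm
  have e00 := congrFun (congrFun hm 0) 0
  have e01 := congrFun (congrFun hm 0) 1
  have e10 := congrFun (congrFun hm 1) 0
  have e11 := congrFun (congrFun hm 1) 1
  simp at e00 e01 e10 e11
  have ht : a + d ≠ 0 := by
    intro h0
    apply h2
    have h00 : a * (a + d) = 2 := by linear_combination e00 + hd
    rw [h0, mul_zero] at h00
    exact h00.symm
  have hb : b = 0 := by
    apply (mul_eq_zero.1 (_ : (a + d) * b = 0)).resolve_left ht
    linear_combination e01
  have hc : c = 0 := by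
    apply (mul_eq_zero.1 (_ : (a + d) * c = 0)).resolve_left ht
    linear_combination e10
  subst hb hc
  have had : a = d := by
    apply sub_eq_zero.1
    apply (mul_eq_zero.1 (_ : (a + d) * (a - d) = 0)).resolve_left ht
    linear_combination e00 - e11
  subst had
  have : a * a = 1 := by linear_combination hd
  rcases mul_self_eq_one_iff.1 this with rfl | rfl
  · left; apply Subtype.ext; simp [coe_mk4, Matrix.one_fin_two]
  · right; apply Subtype.ext; simp [coe_mk4, Matrix.one_fin_two]

theorem tr_zero (A : SLR F) (h : A * A = -1) : (A : Matrix (Fin 2) (Fin 2) F).trace = 0 := by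
  obtain ⟨a, b, c, d, hd, rfl⟩ := exists_mk4 A
  have hm := congrArg (fun M : SLR F => (M : Matrix (Fin 2) (Fin 2) F)) h
  simp only [Matrix.SpecialLinearGroup.coe_mul, coe_mk4, Matrix.mul_fin_two,
    Matrix.SpecialLinearGroup.coe_one, Matrix.one_fin_two, Matrix.SpecialLinearGroup.coe_neg] at hm
  have e00 := congrFun (congrFun hm 0) 0
  have e01 := congrFun (congrFun hm 0) 1
  have e10 := congrFun (congrFun hm 1) 0
  have e11 := congrFun (congrFun hm 1) 1
  simp at e00 e01 e10 e11
  rw [coe_mk4, Matrix.trace_fin_two]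
  simp
  by_contra ht
  have hb : b = 0 := by
    apply (mul_eq_zero.1 (_ : (a + d) * b = 0)).resolve_left ht
    linear_combination e01
  have ha : a = 0 := by
    apply (mul_eq_zero.1 (_ : (a + d) * a = 0)).resolve_left ht
    linear_combination e00 + hd
  subst hb ha
  simp at hd

theorem nilp (p : ℕ) [Fact p.Prime] [CharP F p] (B : SLR F) (h : B ^ p = 1) :
    ((B : Matrix (Fin 2) (Fin 2) F) - 1).trace = 0 ∧ ((B : Matrix (Fin 2) (Fin 2) F) - 1).det = 0 := by
  have h1 : ((B : Matrix (Fin 2) (Fin 2) F) - 1) ^ p = 0 := by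
    rw [sub_pow_char_of_commute _ (Commute.one_right _), one_pow, ← Matrix.SpecialLinearGroup.coe_pow, h]
    simp
  have h2 : IsNilpotent ((B : Matrix (Fin 2) (Fin 2) F) - 1) := ⟨p, h1⟩
  refine ⟨(Matrix.isNilpotent_trace_of_isNilpotent h2).eq_zero, ?_⟩
  have := congrArg Matrix.det h1
  rw [Matrix.det_pow, Matrix.det_zero] at this
  exact pow_eq_zero_iff (Fact.out : p.Prime).ne_zero |>.1 this

theorem obst (p : ℕ) [Fact p.Prime] (hp3 : 3 ≤ p) [CharP F p]
    (θ : Monoid.Coprod (Cyc 2) (Cyc p) →* PSLR F) (g1 g2 : Monoid.Coprod (Cyc 2) (Cyc p))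
    (hg : Subgroup.closure {g1, g2} = ⊤) (x1 x2 : SLR F) (hx1 : mkP x1 = θ g1) (hx2 : mkP x2 = θ g2) :
    IsSquare (-cd (x1 : Matrix (Fin 2) (Fin 2) F) x2) := by
  have hpp : p.Prime := Fact.out
  have : NeZero p := ⟨hpp.ne_zero⟩
  have h2 : (2 : F) ≠ 0 := by
    intro h
    have h3 := (CharP.cast_eq_zero_iff F p 2).1 (by exact_mod_cast h)
    exact absurd (Nat.le_of_dvd (by norm_num) h3) (by omega)
  have hodd : Odd p := hpp.odd_of_ne_two (by omega)
  obtain ⟨A0, hA0⟩ := mkP_surj (θ (ga p))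
  obtain ⟨B0, hB0, hBp⟩ : ∃ B0, mkP B0 = θ (gb p) ∧ B0 ^ p = 1 := by
    obtain ⟨B, hB⟩ := mkP_surj (θ (gb p))
    have h : mkP (B ^ p) = mkP 1 := by
      rw [map_pow, hB, ← map_pow, gb_pow, map_one, map_one]
    rcases (mkP_eq _ _).1 h with h | h
    · exact ⟨B, hB, h⟩
    · refine ⟨-B, ?_, ?_⟩
      · rw [← hB]; exact (mkP_eq _ _).2 (Or.inr rfl)
      · rw [hodd.neg_pow, h, neg_neg]
  have hA : A0 * A0 = 1 ∨ A0 * A0 = -1 := by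
    apply (mkP_eq _ _).1
    rw [map_mul, hA0, ← map_mul, ← sq, ga_sq, map_one, map_one]
  rcases hA with hA | hA
  · have hA1 : θ (ga p) = 1 := by
      rw [← hA0, ← map_one mkP]; exact (mkP_eq _ _).2 (sq_one h2 A0 hA)
    have key : ∀ g x, mkP x = θ g → ∃ n : ℤ, x = B0 ^ n ∨ x = -(B0 ^ n) := by
      intro g x hx
      obtain ⟨n, hn⟩ := Subgroup.mem_zpowers_iff.1 (all_mem p θ (Subgroup.zpowers (θ (gb p)))
        (by rw [hA1]; exact Subgroup.one_mem _) (Subgroup.mem_zpowers _) g)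
      refine ⟨n, (mkP_eq _ _).1 ?_⟩
      rw [hx, ← hn, map_zpow, hB0]
    obtain ⟨n, hn⟩ := key g1 x1 hx1
    obtain ⟨m, hm⟩ := key g2 x2 hx2
    have hc : x1 * x2 = x2 * x1 := by
      have : B0 ^ n * B0 ^ m = B0 ^ m * B0 ^ n := by rw [← _root_.zpow_add, ← _root_.zpow_add, add_comm]
      rcases hn with rfl | rfl <;> rcases hm with rfl | rfl <;> simp [this]
    rw [cd_comm]
    · simp
    · rw [← Matrix.SpecialLinearGroup.coe_mul, hc, Matrix.SpecialLinearGroup.coe_mul]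
  -- main case
  have tA := tr_zero A0 hA
  obtain ⟨tN, dN⟩ := nilp p B0 hBp
  obtain ⟨N0, hN0⟩ : ∃ N0, N0 = (B0 : Matrix (Fin 2) (Fin 2) F) - 1 := ⟨_, rfl⟩
  rw [← hN0] at tN dN
  obtain ⟨A, hAd⟩ : ∃ A, A = (C : F →+* F[X]).mapMatrix (A0 : Matrix (Fin 2) (Fin 2) F) := ⟨_, rfl⟩
  obtain ⟨N1, hN1⟩ : ∃ N1, N1 = (C : F →+* F[X]).mapMatrix N0 := ⟨_, rfl⟩
  obtain ⟨N, hNd⟩ : ∃ N : Matrix (Fin 2) (Fin 2) F[X], N = (X : F[X]) • N1 := ⟨_, rfl⟩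
  have dA' : A.det = 1 := by rw [hAd, ← RingHom.map_det, A0.det_coe, map_one]
  have tA' : A.trace = 0 := by
    rw [hAd, Matrix.trace_fin_two]
    rw [Matrix.trace_fin_two] at tA
    simp [← C_add, tA]
  have tN1 : N1.trace = 0 := by
    rw [hN1, Matrix.trace_fin_two]
    rw [Matrix.trace_fin_two] at tN
    simp [← C_add, tN]
  have dN1 : N1.det = 0 := by rw [hN1, ← RingHom.map_det, dN, map_zero]
  have tN' : N.trace = 0 := by rw [hNd, Matrix.trace_smul, tN1, smul_zero]
  have dN' : N.det = 0 := by rw [hNd, Matrix.det_smul, dN1, mul_zero]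
  have hr := rel_of A N tA' dA' tN' dN'
  have hw : ((A * N).trace).eval 0 = 0 := by
    rw [hNd, mul_smul_comm, Matrix.trace_smul]; simp
  generalize (A * N).trace = w at hr hw
  have dB : (1 + N).det = 1 := by
    rw [Matrix.trace_fin_two] at tN'
    rw [Matrix.det_fin_two] at dN' ⊢
    simp
    linear_combination tN' + dN'
  obtain ⟨a, ha⟩ : ∃ a : SLR F[X], (a : Matrix (Fin 2) (Fin 2) F[X]) = A := ⟨⟨A, dA'⟩, rfl⟩
  obtain ⟨b, hb⟩ : ∃ b : SLR F[X], (b : Matrix (Fin 2) (Fin 2) F[X]) = 1 + N := ⟨⟨1 + N, dB⟩, rfl⟩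
  have ha2 : a ^ 2 = -1 := by
    apply Subtype.ext
    rw [sq, Matrix.SpecialLinearGroup.coe_mul, ha, hr.hA, Matrix.SpecialLinearGroup.coe_neg]; rfl
  have hbp : b ^ p = 1 := by
    apply Subtype.ext
    rw [Matrix.SpecialLinearGroup.coe_pow, hb, pow_one_add _ hr.hN, CharP.cast_eq_zero]; simp
  obtain ⟨Θ, hΘa, hΘb⟩ := exists_lift p (mkP a) (mkP b)
    (by rw [← map_pow, ha2, ← map_one mkP]; exact (mkP_eq _ _).2 (Or.inr rfl))
    (by rw [← map_pow, hbp, map_one])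
  obtain ⟨ev, hev⟩ : ∃ ev : SLR F[X] →* SLR F, ev = Matrix.SpecialLinearGroup.map (evalRingHom (1 : F)) := ⟨_, rfl⟩
  have evc : ∀ z, ((ev z : SLR F) : Matrix (Fin 2) (Fin 2) F) = (evalRingHom (1 : F)).mapMatrix (z : Matrix (Fin 2) (Fin 2) F[X]) := by
    intro z; rw [hev]; rfl
  have evneg : ∀ z, ev (-z) = - ev z := by
    intro z; apply Subtype.ext
    rw [evc, Matrix.SpecialLinearGroup.coe_neg, Matrix.SpecialLinearGroup.coe_neg, evc, map_neg]
  have eva : ev a = A0 := by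
    apply Subtype.ext; rw [evc, ha, hAd]; ext i j; simp
  have evb : ev b = B0 := by
    apply Subtype.ext; rw [evc, hb, map_add, map_one, hNd, hN1]
    have : (B0 : Matrix (Fin 2) (Fin 2) F) = 1 + N0 := by rw [hN0]; abel
    rw [this]
    congr 1
    ext i j; simp
  obtain ⟨κ, hκ⟩ : ∃ κ : PSLR F[X] →* PSLR F, ∀ z, κ (mkP z) = mkP (ev z) := by
    refine ⟨QuotientGroup.lift _ (mkP.comp ev) ?_, fun z => rfl⟩
    intro z hz
    rw [MonoidHom.mem_ker, MonoidHom.comp_apply, ← map_one mkP, mkP_eq]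
    rcases (center_pm z).1 hz with rfl | rfl
    · left; simp
    · right; rw [evneg, map_one]
  have hκΘ : κ.comp Θ = θ := by
    apply hom_eq p
    · rw [MonoidHom.comp_apply, hΘa, hκ, eva, hA0]
    · rw [MonoidHom.comp_apply, hΘb, hκ, evb, hB0]
  have lft : ∀ g x, mkP x = θ g → ∃ z, mkP z = Θ g ∧ ev z = x := by
    intro g x hx
    obtain ⟨z, hz⟩ := mkP_surj (Θ g)
    have : mkP x = mkP (ev z) := by
      rw [hx, ← hκΘ, MonoidHom.comp_apply, ← hz, hκ]
    rcases (mkP_eq _ _).1 this with h | h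
    · exact ⟨z, hz, h.symm⟩
    · refine ⟨-z, ?_, ?_⟩
      · rw [← hz]; exact (mkP_eq _ _).2 (Or.inr rfl)
      · rw [evneg, h]
  obtain ⟨z1, hz1, ez1⟩ := lft g1 x1 hx1
  obtain ⟨z2, hz2, ez2⟩ := lft g2 x2 hx2
  have shp : ∀ g z, mkP z = Θ g → Shp A N (z : Matrix (Fin 2) (Fin 2) F[X]) := by
    intro g z hz
    have h := all_mem p Θ ((Subgroup.closure {a, b}).map mkP)
      (by rw [hΘa]; exact ⟨a, Subgroup.subset_closure (by simp), rfl⟩)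
      (by rw [hΘb]; exact ⟨b, Subgroup.subset_closure (by simp), rfl⟩) g
    obtain ⟨y, hy, hy'⟩ := h
    have hs := shp_closure hr hw a b y ha hb hy
    rw [← hz] at hy'
    rcases (mkP_eq _ _).1 hy'.symm with h | h
    · rw [h]; exact hs
    · rw [h, Matrix.SpecialLinearGroup.coe_neg]; exact hs.neg
  have spn : ∀ g z, mkP z = Θ g → ∃ c0 c1 c2 c3, (z : Matrix (Fin 2) (Fin 2) F[X]) =
      cb (z1 : Matrix (Fin 2) (Fin 2) F[X]) z2 c0 c1 c2 c3 := by
    intro g z hz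
    have h : Θ g ∈ (Subgroup.closure {z1, z2}).map mkP := by
      rw [MonoidHom.map_closure, Set.image_pair, hz1, hz2, ← Set.image_pair, ← MonoidHom.map_closure, hg]
      exact ⟨g, trivial, rfl⟩
    obtain ⟨y, hy, hy'⟩ := h
    obtain ⟨c0, c1, c2, c3, hs⟩ := span_closure z1 z2 y hy
    rw [← hz] at hy'
    rcases (mkP_eq _ _).1 hy'.symm with h | h
    · rw [h]; exact ⟨_, _, _, _, hs⟩
    · rw [h, Matrix.SpecialLinearGroup.coe_neg, hs, cb_neg]; exact ⟨_, _, _, _, rfl⟩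
  have fin := core hr hw _ _ (shp g1 z1 hz1) (shp g2 z2 hz2)
    (by rw [← ha]; exact spn _ _ hΘa.symm) (by rw [← hb]; exact spn _ _ hΘb.symm)
    (by rw [← ha, ← hb, ← Matrix.SpecialLinearGroup.coe_mul]
        exact spn (ga p * gb p) _ (by rw [map_mul, map_mul, hΘa, hΘb]))
  rw [← ez1, ← ez2, evc, evc, cd_map]
  exact fin

end fin
end Pf

/-- for `G = C_2 ∗ C_p` and `H = PSL(2,q)` where `q = p^k` is a power of
a prime `p ≥ 3` with `q ≥ 7`, `q ≠ 9`, the group `H` is a homomorphic image of `G`,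
and some generating pair of `H` does not lift to a generating pair of `G` along any
homomorphism `G → H`. -/
theorem stmt1 (p k : ℕ) (hp : p.Prime) (hp3 : 3 ≤ p)
    (F : Type) [Field F] [Fintype F] (hcard : Fintype.card F = p ^ k)
    (hq7 : 7 ≤ p ^ k) (hq9 : p ^ k ≠ 9) :
    (∃ φ : Monoid.Coprod (Cyc 2) (Cyc p) →* PSL2 F, Function.Surjective φ) ∧
    ∃ h1 h2 : PSL2 F, Subgroup.closure {h1, h2} = ⊤ ∧
      ∀ (θ : Monoid.Coprod (Cyc 2) (Cyc p) →* PSL2 F)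
        (g1 g2 : Monoid.Coprod (Cyc 2) (Cyc p)),
        Subgroup.closure {g1, g2} = ⊤ → (θ g1, θ g2) ≠ (h1, h2) := by
  have hfact := Fact.mk hp
  have hch : CharP F p := charP_of_card_eq_prime_pow hcard
  obtain ⟨⟨A, B, hA, ⟨N, hB, hN⟩, hAB⟩, x1, x2, hx, hsq⟩ := Pf.all_pairs (F := F) p k hp hp3 hcard hq7 hq9
  have neg1 : Pf.mkP (-1 : Pf.SLR F) = 1 := by
    rw [← map_one Pf.mkP]; exact (Pf.mkP_eq _ _).2 (Or.inr rfl)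
  have top : ∀ (y1 y2 : SL2 F) (K : Subgroup (PSL2 F)), Pf.Gen y1 y2 → Pf.mkP y1 ∈ K → Pf.mkP y2 ∈ K → K = ⊤ := by
    intro y1 y2 K hy h1 h2
    have h := hy (K.comap Pf.mkP) h1 h2 (by rw [Subgroup.mem_comap, neg1]; exact K.one_mem)
    rw [eq_top_iff]
    intro z _
    obtain ⟨y, rfl⟩ := Pf.mkP_surj z
    have : y ∈ K.comap Pf.mkP := by rw [h]; trivial
    exact this
  constructor
  · obtain ⟨f, fa, fb⟩ := Pf.exists_lift p (Pf.mkP A) (Pf.mkP B)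
      (by rw [← map_pow, sq, hA, neg1])
      (by
        have : B ^ p = 1 := by
          apply Subtype.ext
          rw [Matrix.SpecialLinearGroup.coe_pow, hB, Pf.pow_one_add _ hN, CharP.cast_eq_zero]; simp
        rw [← map_pow, this, map_one])
    refine ⟨f, MonoidHom.range_eq_top.1 ?_⟩
    exact top A B _ hAB ⟨_, fa⟩ ⟨_, fb⟩
  · refine ⟨Pf.mkP x1, Pf.mkP x2, ?_, ?_⟩
    · exact top x1 x2 _ hx (Subgroup.subset_closure (by simp)) (Subgroup.subset_closure (by simp))
    · intro θ g1 g2 hg he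
      rw [Prod.mk.injEq] at he
      exact hsq (Pf.obst p hp3 θ g1 g2 hg x1 x2 he.1.symm he.2.symm)
end
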